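/- Extended generalized Faulhaber formula: Let m ∈ ℂ with m ≠ −1 and let x ∈ ℝ with x > 0. Then the series ∑_{k=1}^{∞} (−1)^k (∑_{l=1}^{k} C(m+1, l) S_k^{(1)}(l) B_l({x})) / ((x+1)(x+2)⋯(x+k)) converges absolutely, and ∑_{k=1}^{⌊x⌋} k^m = x^{m+1}/(m+1) + ζ(−m) + (x^{m+1}/(m+1)) ∑_{k=1}^{∞} (−1)^k (∑_{l=1}^{k} C(m+1, l) S_k^{(1)}(l) B_l({x})) / ((x+1)(x+2)⋯(x+k)). -/

import Mathlib

open Finset in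
/-- Unsigned Stirling numbers of the first kind, via the rising-factorial recurrence:
`z(z+1)⋯(z+k−1) = ∑ l, stirling1Unsigned k l * z^l`. -/
def stirling1Unsigned : ℕ → ℕ → ℕ
  | 0, 0 => 1
  | 0, _ + 1 => 0
  | k + 1, 0 => k * stirling1Unsigned k 0
  | k + 1, l + 1 => stirling1Unsigned k l + k * stirling1Unsigned k (l + 1)

/-- The Stirling numbers of the first kind `S_k^{(1)}(l)` of the paper, defined by
`z(z+1)⋯(z+k−1) = (−1)^k ∑_{l=0}^k (−1)^l S_k^{(1)}(l) z^l`, i.e.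
`S_k^{(1)}(l) = (−1)^{k−l}` times the coefficient of `z^l` in the rising factorial. -/
def S1 (k l : ℕ) : ℤ := (-1) ^ (k + l) * stirling1Unsigned k l

/-- The `n`-th Bernoulli polynomial `B_n(x) = ∑_{k=0}^n C(n,k) B_k x^{n−k}`,
with `B_1 = −1/2`. -/
noncomputable def bernPoly (n : ℕ) (x : ℝ) : ℝ :=
  ∑ k ∈ Finset.range (n + 1), (n.choose k : ℝ) * (bernoulli k : ℝ) * x ^ (n - k)

/-- The generalized binomial coefficient `C(w,k) = w(w−1)⋯(w−k+1)/k!`. -/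
noncomputable def cchoose (w : ℂ) (k : ℕ) : ℂ :=
  (∏ i ∈ Finset.range k, (w - i)) / (k.factorial : ℂ)

/-- The rising product `(z+1)(z+2)⋯(z+k)`. -/
noncomputable def risingProd (z : ℂ) (k : ℕ) : ℂ :=
  ∏ i ∈ Finset.range k, (z + i + 1)

/-- The rising product `(x+1)(x+2)⋯(x+k)` over the reals. -/
noncomputable def risingProdR (x : ℝ) (k : ℕ) : ℝ :=
  ∏ i ∈ Finset.range k, (x + i + 1)

/-- The digamma function `ψ(z) = Γ′(z)/Γ(z)`. -/
noncomputable def digamma (z : ℂ) : ℂ := deriv Complex.Gamma z / Complex.Gamma z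

/-!
With `α = -(m + 1)` and `b = {x}`, the `k`-th term of the series is
`(x + 1)⁻¹ ⋯ (x + k)⁻¹ ∑ l, c(k, l) l! fₗ`, where `c(k, l)` are the unsigned Stirling numbers and
`f` is the Hadamard product of `F(t) = t e^{bt} / (e^t - 1)` with `(1 - t)^(-α)`. The numbers
`∑ l, c(k, l) l! fₗ` are the derivatives at `0` of `u ↦ f(-log (1 - u))`. The map `-log (1 - u)`
sends the unit disc into the strip `|Im t| < π / 2`, where `F` is holomorphic with subexponential
growth; the Cauchy estimate, together with the fact that Hadamard multiplication by `(1 - t)^(-α)`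
is a combination of Beta averages and shifts, makes the series converge absolutely and locally
uniformly in `α`.

For `0 < α < 1` the coefficients of `(1 - t)^(-α)` are moments of a Beta density, and
`k! / ((x + 1) ⋯ (x + k))` is `∫ x e^{-xt} (1 - e^{-t})^k dt`. Hence the series, with the term
`k = 0` included, is the Beta average over `v` of `∫ x e^{-xt} F(vt) dt`. Expanding `F` into a
geometric series, this equals `α x^α ∑ n, (n + ⌊x⌋ + 1)^(-1 - α)`, a tail of `ζ(1 + α)`. The
formula follows for all `m ≠ -1` by analytic continuation.
-/

section Development

open Complex Filter MeasureTheory Set Topology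
open scoped Nat PowerSeries

/-! ### Stirling numbers and Taylor series -/

theorem stirling1Unsigned_eq_stirlingFirst (k l : ℕ) :
    stirling1Unsigned k l = Nat.stirlingFirst k l := by
  induction k generalizing l with
  | zero => cases l <;> rfl
  | succ k ih =>
    cases l with
    | zero =>
      rw [stirling1Unsigned, ih, Nat.stirlingFirst_succ_zero]
      cases k <;> simp
    | succ l => rw [stirling1Unsigned, ih, ih, Nat.stirlingFirst_succ_succ, add_comm]

theorem sum_stirlingFirst_succ_mul {R : Type*} [CommSemiring R] (k : ℕ) (f : ℕ → R) :
    ∑ l ∈ Finset.range (k + 2), (Nat.stirlingFirst (k + 1) l : R) * f l =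
      ∑ l ∈ Finset.range (k + 1), (Nat.stirlingFirst k l : R) * (f (l + 1) + k * f l) := by
  have hshift : ∑ l ∈ Finset.range (k + 1), (k * Nat.stirlingFirst k (l + 1) : R) * f (l + 1) =
      ∑ l ∈ Finset.range (k + 1), (k * Nat.stirlingFirst k l : R) * f l := by
    have hzero : (k * Nat.stirlingFirst k 0 : R) = 0 := by cases k <;> simp
    rw [Finset.sum_range_succ, Nat.stirlingFirst_eq_zero_of_lt k.lt_succ_self,
      Finset.sum_range_succ' _ k, hzero]
    simp
  rw [Finset.sum_range_succ']
  simp only [Nat.stirlingFirst_succ_succ, Nat.stirlingFirst_succ_zero, Nat.cast_add, Nat.cast_mul,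
    Nat.cast_zero, zero_mul, add_zero, add_mul, Finset.sum_add_distrib, hshift, mul_add]
  rw [add_comm]
  congr 1
  exact Finset.sum_congr rfl fun l _ => by ring

/-- The Taylor series at the origin of a function of one complex variable, as a formal power
series. -/
noncomputable def taylorSeries (F : ℂ → ℂ) : ℂ⟦X⟧ :=
  PowerSeries.mk fun n => iteratedDeriv n F 0 / n !

theorem coeff_taylorSeries (F : ℂ → ℂ) (n : ℕ) :
    PowerSeries.coeff n (taylorSeries F) = iteratedDeriv n F 0 / n ! :=
  PowerSeries.coeff_mk _ _

theorem factorial_mul_coeff_taylorSeries (F : ℂ → ℂ) (n : ℕ) :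
    n ! * PowerSeries.coeff n (taylorSeries F) = iteratedDeriv n F 0 := by
  rw [coeff_taylorSeries, mul_div_cancel₀ _ (Nat.cast_ne_zero.2 n.factorial_ne_zero)]

theorem taylorSeries_const (c : ℂ) : taylorSeries (fun _ => c) = PowerSeries.C c := by
  ext n
  rw [coeff_taylorSeries, PowerSeries.coeff_C]
  cases n <;> simp [iteratedDeriv_succ']

theorem taylorSeries_id : taylorSeries (fun t => t) = PowerSeries.X := by
  ext n
  rw [coeff_taylorSeries, PowerSeries.coeff_X]
  rcases n with _ | _ | n <;> simp [iteratedDeriv_succ']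

theorem taylorSeries_add {F G : ℂ → ℂ} (hF : AnalyticAt ℂ F 0) (hG : AnalyticAt ℂ G 0) :
    taylorSeries (fun t => F t + G t) = taylorSeries F + taylorSeries G := by
  ext n
  simp only [map_add, coeff_taylorSeries, iteratedDeriv_fun_add hF.contDiffAt hG.contDiffAt,
    add_div]

theorem taylorSeries_mul {F G : ℂ → ℂ} (hF : AnalyticAt ℂ F 0) (hG : AnalyticAt ℂ G 0) :
    taylorSeries (fun t => F t * G t) = taylorSeries F * taylorSeries G := by
  ext n
  rw [PowerSeries.coeff_mul, Finset.Nat.sum_antidiagonal_eq_sum_range_succ_mk]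
  simp only [coeff_taylorSeries]
  rw [show (fun t => F t * G t) = F * G from rfl, iteratedDeriv_mul hF.contDiffAt hG.contDiffAt,
    Finset.sum_div]
  refine Finset.sum_congr rfl fun i hi => ?_
  rw [Nat.cast_choose ℂ (Finset.mem_range_succ_iff.1 hi)]
  have hn : (n ! : ℂ) ≠ 0 := Nat.cast_ne_zero.2 n.factorial_ne_zero
  field_simp

theorem taylorSeries_pow_mul {F : ℂ → ℂ} (hF : AnalyticAt ℂ F 0) (p : ℕ) :
    taylorSeries (fun t => t ^ p * F t) = PowerSeries.X ^ p * taylorSeries F := by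
  induction p with
  | zero => simp
  | succ p ih =>
    simp only [pow_succ', mul_assoc]
    rw [taylorSeries_mul (F := fun t => t) (G := fun t => t ^ p * F t) analyticAt_id
      ((analyticAt_id.pow p).mul hF), taylorSeries_id, ih]

theorem taylorSeries_deriv (F : ℂ → ℂ) :
    taylorSeries (deriv F) = PowerSeries.derivative ℂ (taylorSeries F) := by
  ext n
  rw [PowerSeries.coeff_derivative, coeff_taylorSeries, coeff_taylorSeries, ← iteratedDeriv_succ',
    Nat.factorial_succ]
  push_cast
  field_simp

theorem iteratedDeriv_comp_mul_left (F : ℂ → ℂ) (v : ℂ) (n : ℕ) :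
    iteratedDeriv n (fun t => F (v * t)) = fun t => v ^ n * iteratedDeriv n F (v * t) := by
  induction n with
  | zero => simp
  | succ n ih =>
    ext t
    rw [iteratedDeriv_succ, ih, deriv_const_mul_field, deriv_comp_mul_left, iteratedDeriv_succ,
      smul_eq_mul, pow_succ, mul_assoc]

theorem taylorSeries_comp_mul_left (F : ℂ → ℂ) (v : ℂ) :
    taylorSeries (fun t => F (v * t)) = PowerSeries.rescale v (taylorSeries F) := by
  ext n
  rw [PowerSeries.coeff_rescale, coeff_taylorSeries, coeff_taylorSeries,
    iteratedDeriv_comp_mul_left]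
  simp only [mul_zero, mul_div_assoc]

theorem id_mul_dslope_zero_add (F : ℂ → ℂ) : (fun t => t * dslope F 0 t + F 0) = F := by
  ext t
  have h := sub_smul_dslope F 0 t
  rw [sub_zero, smul_eq_mul] at h
  rw [h, sub_add_cancel]

theorem taylorSeries_eq_X_mul_dslope_add {F : ℂ → ℂ} (hF : AnalyticAt ℂ (dslope F 0) 0) :
    taylorSeries F = PowerSeries.X * taylorSeries (dslope F 0) + PowerSeries.C (F 0) := by
  conv_lhs => rw [← id_mul_dslope_zero_add F]
  rw [taylorSeries_add (F := fun t => t * dslope F 0 t) (analyticAt_id.mul hF) analyticAt_const,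
    taylorSeries_mul (F := fun t => t) analyticAt_id hF, taylorSeries_const, taylorSeries_id]

theorem coeff_taylorSeries_dslope {F : ℂ → ℂ} (hF : AnalyticAt ℂ (dslope F 0) 0) (n : ℕ) :
    PowerSeries.coeff n (taylorSeries (dslope F 0)) =
      PowerSeries.coeff (n + 1) (taylorSeries F) := by
  rw [taylorSeries_eq_X_mul_dslope_add hF]
  simp [PowerSeries.coeff_succ_X_mul]

/-! ### Functions of subexponential growth on half-strips -/

/-- The half-strip `-r < Re t`, `|Im t| < r`, which contains a disc around the origin and the
positive real axis. -/
def halfStrip (r : ℝ) : Set ℂ := {t | -r < t.re ∧ |t.im| < r}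

theorem isOpen_halfStrip (r : ℝ) : IsOpen (halfStrip r) :=
  (isOpen_lt continuous_const continuous_re).inter
    (isOpen_lt (continuous_abs.comp continuous_im) continuous_const)

theorem ofReal_mem_halfStrip {r t : ℝ} (hr : 0 < r) (ht : 0 ≤ t) : (t : ℂ) ∈ halfStrip r := by
  simpa [halfStrip, hr] using (neg_neg_of_pos hr).trans_le ht

theorem halfStrip_mem_nhds_zero {r : ℝ} (hr : 0 < r) : halfStrip r ∈ 𝓝 0 :=
  (isOpen_halfStrip r).mem_nhds (by simpa using ofReal_mem_halfStrip hr le_rfl)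

theorem halfStrip_subset_halfStrip {r r' : ℝ} (h : r ≤ r') : halfStrip r ⊆ halfStrip r' :=
  fun _ ht => ⟨by linarith [ht.1], ht.2.trans_le h⟩

theorem ofReal_mul_mem_halfStrip {r v : ℝ} {t : ℂ} (hv₀ : 0 ≤ v) (hv₁ : v ≤ 1)
    (ht : t ∈ halfStrip r) : (v : ℂ) * t ∈ halfStrip r := by
  have hr : 0 < r := (abs_nonneg _).trans_lt ht.2
  simp only [halfStrip, mem_ofPred_eq, re_ofReal_mul, im_ofReal_mul, abs_mul, abs_of_nonneg hv₀]
  refine ⟨?_, (mul_le_of_le_one_left (abs_nonneg _) hv₁).trans_lt ht.2⟩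
  rcases le_total 0 t.re with hre | hre
  · linarith [mul_nonneg hv₀ hre]
  · linarith [mul_le_mul_of_nonpos_right hv₁ hre, ht.1]

theorem closedBall_subset_halfStrip {t : ℂ} {r r' δ : ℝ} (ht : t ∈ halfStrip r)
    (h : r + δ ≤ r') : Metric.closedBall t δ ⊆ halfStrip r' := by
  intro z hz
  rw [Metric.mem_closedBall, dist_eq_norm] at hz
  have hre := (abs_le.1 ((abs_re_le_norm (z - t)).trans hz)).1
  have him := (abs_sub_abs_le_abs_sub z.im t.im).trans ((abs_im_le_norm (z - t)).trans hz)
  rw [sub_re] at hre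
  exact ⟨by linarith [ht.1], by linarith [ht.2]⟩

theorem norm_deriv_le_of_norm_le_exp {F : ℂ → ℂ} {r r' ε C : ℝ} (hr : r < r') (hε : 0 ≤ ε)
    (hC : 0 ≤ C) (hF : DifferentiableOn ℂ F (halfStrip r'))
    (hb : ∀ t ∈ halfStrip r', ‖F t‖ ≤ C * Real.exp (ε * t.re)) {t : ℂ} (ht : t ∈ halfStrip r) :
    ‖deriv F t‖ ≤ C * (Real.exp (ε * (r' - r)) / (r' - r)) * Real.exp (ε * t.re) := by
  have hsub := closedBall_subset_halfStrip ht (add_sub_cancel r r').le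
  calc ‖deriv F t‖ ≤ C * Real.exp (ε * (t.re + (r' - r))) / (r' - r) := by
        refine norm_deriv_le_of_forall_mem_sphere_norm_le (sub_pos.2 hr)
          (hF.mono (Metric.closure_ball_subset_closedBall.trans hsub)).diffContOnCl fun z hz => ?_
        refine (hb z (hsub (Metric.sphere_subset_closedBall hz))).trans ?_
        have hre := (abs_le.1 ((abs_re_le_norm (z - t)).trans (mem_sphere_iff_norm.1 hz).le)).2
        rw [sub_re] at hre
        gcongr
        linarith
    _ = _ := by rw [mul_add, Real.exp_add]; ring

theorem norm_pow_le_mul_exp_of_mem_halfStrip (p : ℕ) {ε r : ℝ} (hε : 0 < ε) {t : ℂ}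
    (ht : t ∈ halfStrip r) :
    ‖t‖ ^ p ≤ p ! * Real.exp (3 * r * ε) / ε ^ p * Real.exp (ε * t.re) := by
  have hnorm : ‖t‖ ≤ t.re + 3 * r := by
    have habs : |t.re| ≤ t.re + 2 * r :=
      abs_le.2 ⟨by linarith [ht.1], by linarith [(abs_nonneg t.im).trans_lt ht.2]⟩
    linarith [norm_le_abs_re_add_abs_im t, ht.2]
  have hexp := Real.pow_div_factorial_le_exp (ε * ‖t‖) (by positivity) p
  rw [div_le_iff₀ (by positivity), mul_pow] at hexp
  rw [div_mul_eq_mul_div, le_div_iff₀ (by positivity)]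
  calc ‖t‖ ^ p * ε ^ p ≤ Real.exp (ε * ‖t‖) * p ! := by rwa [mul_comm]
    _ ≤ Real.exp (ε * (t.re + 3 * r)) * p ! := by gcongr
    _ = _ := by rw [mul_add, Real.exp_add]; ring_nf

/-- `IsSubexpOn F r` says that `F` is holomorphic on the half-strip of size `r` and grows there
more slowly than every exponential `exp (ε Re t)`, `0 < ε`. -/
structure IsSubexpOn (F : ℂ → ℂ) (r : ℝ) : Prop where
  differentiableOn : DifferentiableOn ℂ F (halfStrip r)
  isBigO : ∀ ε : ℝ, 0 < ε → F =O[𝓟 (halfStrip r)] fun t => Real.exp (ε * t.re)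

namespace IsSubexpOn

variable {F G : ℂ → ℂ} {r r' : ℝ}

theorem exists_norm_le (hF : IsSubexpOn F r) {ε : ℝ} (hε : 0 < ε) :
    ∃ C, 0 ≤ C ∧ ∀ t ∈ halfStrip r, ‖F t‖ ≤ C * Real.exp (ε * t.re) := by
  obtain ⟨C, hC, h⟩ := (hF.isBigO ε hε).exists_nonneg
  exact ⟨C, hC, fun t ht => by simpa using Asymptotics.isBigOWith_principal.1 h t ht⟩

theorem of_norm_le (hF : DifferentiableOn ℂ F (halfStrip r))
    (hb : ∀ ε : ℝ, 0 < ε → ∃ C, ∀ t ∈ halfStrip r, ‖F t‖ ≤ C * Real.exp (ε * t.re)) :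
    IsSubexpOn F r := by
  refine ⟨hF, fun ε hε => ?_⟩
  obtain ⟨C, hC⟩ := hb ε hε
  exact Asymptotics.isBigO_principal.2 ⟨C, fun t ht => by simpa using hC t ht⟩

theorem analyticAt_zero (hF : IsSubexpOn F r) (hr : 0 < r) : AnalyticAt ℂ F 0 :=
  hF.differentiableOn.analyticAt (halfStrip_mem_nhds_zero hr)

theorem mono (hF : IsSubexpOn F r) (h : r' ≤ r) : IsSubexpOn F r' :=
  ⟨hF.differentiableOn.mono (halfStrip_subset_halfStrip h), fun ε hε =>
    (hF.isBigO ε hε).mono (principal_mono.2 (halfStrip_subset_halfStrip h))⟩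

theorem pow (p : ℕ) (r : ℝ) : IsSubexpOn (fun t => t ^ p) r :=
  of_norm_le (by fun_prop) fun _ hε => ⟨_, fun t ht => by
    simpa using norm_pow_le_mul_exp_of_mem_halfStrip p hε ht⟩

theorem const (c : ℂ) (r : ℝ) : IsSubexpOn (fun _ => c) r :=
  ⟨by fun_prop, fun ε hε =>
    (Asymptotics.isBigO_const_const c one_ne_zero _).trans (by simpa using (pow 0 r).isBigO ε hε)⟩

theorem add (hF : IsSubexpOn F r) (hG : IsSubexpOn G r) : IsSubexpOn (fun t => F t + G t) r :=
  ⟨hF.differentiableOn.add hG.differentiableOn, fun ε hε =>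
    (hF.isBigO ε hε).add (hG.isBigO ε hε)⟩

theorem mul (hF : IsSubexpOn F r) (hG : IsSubexpOn G r) : IsSubexpOn (fun t => F t * G t) r := by
  refine ⟨hF.differentiableOn.mul hG.differentiableOn, fun ε hε => ?_⟩
  refine ((hF.isBigO _ (half_pos hε)).mul (hG.isBigO _ (half_pos hε))).congr_right fun t => ?_
  rw [← Real.exp_add, ← add_mul, add_halves]

theorem deriv (hF : IsSubexpOn F r) (h : r' < r) : IsSubexpOn (deriv F) r' := by
  refine of_norm_le ((hF.differentiableOn.deriv (isOpen_halfStrip r)).mono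
    (halfStrip_subset_halfStrip h.le)) fun ε hε => ?_
  obtain ⟨C, hC, hb⟩ := hF.exists_norm_le hε
  exact ⟨_, fun t ht => norm_deriv_le_of_norm_le_exp h hε.le hC hF.differentiableOn hb ht⟩

theorem dslope (hF : IsSubexpOn F r) (hr : 0 < r) : IsSubexpOn (dslope F 0) r := by
  have hd : DifferentiableOn ℂ (_root_.dslope F 0) (halfStrip r) :=
    (Complex.differentiableOn_dslope (halfStrip_mem_nhds_zero hr)).2 hF.differentiableOn
  refine ⟨hd, fun ε hε => ?_⟩
  have hball : Metric.closedBall (0 : ℂ) (r / 2) ⊆ halfStrip r :=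
    closedBall_subset_halfStrip (r := r / 2)
      (by simpa using ofReal_mem_halfStrip (half_pos hr) le_rfl) (add_halves r).le
  have hnear : _root_.dslope F 0 =O[𝓟 (Metric.closedBall 0 (r / 2))]
      fun t => Real.exp (ε * t.re) :=
    ((hd.continuousOn.mono hball).isBigO_principal (isCompact_closedBall _ _)
      (c := (1 : ℂ)) (by simp)).trans
      (((const 1 r).isBigO ε hε).mono (principal_mono.2 hball))
  have hfar : _root_.dslope F 0 =O[𝓟 (halfStrip r \ Metric.closedBall 0 (r / 2))]
      fun t => F t + -F 0 := by
    refine Asymptotics.isBigO_principal.2 ⟨2 / r, fun t ht => ?_⟩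
    have hnorm : r / 2 ≤ ‖t‖ := by simpa using (not_le.1 (mt (mem_closedBall_zero_iff.2) ht.2)).le
    have hslope := sub_smul_dslope F 0 t
    rw [sub_zero, smul_eq_mul] at hslope
    rw [← sub_eq_add_neg, ← hslope, norm_mul, ← mul_assoc]
    refine le_mul_of_one_le_left (norm_nonneg _) ?_
    rw [div_mul_eq_mul_div, one_le_div hr]
    linarith
  have hunion := hnear.sup (hfar.trans
    (((hF.add (const (-F 0) r)).isBigO ε hε).mono (principal_mono.2 sdiff_subset)))
  rwa [sup_principal, union_sdiff_cancel hball] at hunion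

end IsSubexpOn

/-! ### Hadamard products with binomial series -/

theorem multichoose_eq_ascPochhammer_div (α : ℂ) (n : ℕ) :
    Ring.multichoose α n = (ascPochhammer ℂ n).eval α / n ! := by
  have h := Ring.factorial_nsmul_multichoose_eq_ascPochhammer α n
  rw [nsmul_eq_mul, Polynomial.ascPochhammer_smeval_eq_eval] at h
  rw [← h, mul_div_cancel_left₀ _ (Nat.cast_ne_zero.2 n.factorial_ne_zero)]

theorem mul_multichoose_add_one (α : ℂ) (n : ℕ) :
    α * Ring.multichoose (α + 1) n = (α + n) * Ring.multichoose α n := by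
  have h : α * (ascPochhammer ℂ n).eval (α + 1) = (α + n) * (ascPochhammer ℂ n).eval α := by
    rw [mul_comm (α + n), ← ascPochhammer_succ_eval, ascPochhammer_succ_left]
    simp
  simp only [multichoose_eq_ascPochhammer_div, ← mul_div_assoc, h]

theorem cchoose_eq_multichoose (w : ℂ) (n : ℕ) :
    cchoose w n = (-1) ^ n * Ring.multichoose (-w) n := by
  rw [cchoose, multichoose_eq_ascPochhammer_div, ← mul_div_assoc]
  congr 1
  induction n with
  | zero => simp
  | succ n ih => rw [Finset.prod_range_succ, ih, ascPochhammer_succ_eval]; ring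

/-- The Hadamard product of `f` with the binomial series `(1 - X)^(-α)`. -/
noncomputable def binomialHadamard (α : ℂ) (f : ℂ⟦X⟧) : ℂ⟦X⟧ :=
  PowerSeries.mk fun n => Ring.multichoose α n * PowerSeries.coeff n f

/-- The backward shift `(f - f(0)) / X` of a power series. -/
noncomputable def backwardShift (f : ℂ⟦X⟧) : ℂ⟦X⟧ :=
  PowerSeries.mk fun n => PowerSeries.coeff (n + 1) f

theorem coeff_binomialHadamard (α : ℂ) (f : ℂ⟦X⟧) (n : ℕ) :
    PowerSeries.coeff n (binomialHadamard α f) =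
      Ring.multichoose α n * PowerSeries.coeff n f :=
  PowerSeries.coeff_mk _ _

theorem binomialHadamard_one (f : ℂ⟦X⟧) : binomialHadamard 1 f = f := by
  ext n
  rw [coeff_binomialHadamard, Ring.multichoose_one, one_mul]

theorem binomialHadamard_add_one {α : ℂ} (hα : α ≠ 0) (f : ℂ⟦X⟧) :
    binomialHadamard (α + 1) f = binomialHadamard α f +
      PowerSeries.C α⁻¹ * (PowerSeries.X * PowerSeries.derivative ℂ (binomialHadamard α f)) := by
  ext n
  have hstep : Ring.multichoose (α + 1) n = (1 + α⁻¹ * n) * Ring.multichoose α n := by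
    rw [← mul_right_inj' hα, mul_multichoose_add_one, ← mul_assoc, mul_add, mul_one,
      mul_inv_cancel_left₀ hα]
  rw [map_add, PowerSeries.coeff_C_mul, coeff_binomialHadamard, hstep]
  cases n with
  | zero => simp [coeff_binomialHadamard]
  | succ n =>
    rw [PowerSeries.coeff_succ_X_mul, PowerSeries.coeff_derivative, coeff_binomialHadamard]
    push_cast
    ring

theorem binomialHadamard_eq_sub (α : ℂ) (f : ℂ⟦X⟧) :
    binomialHadamard α f = binomialHadamard (α + 1) f -
      PowerSeries.X * binomialHadamard (α + 1) (backwardShift f) := by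
  ext n
  rw [map_sub]
  cases n with
  | zero => simp [coeff_binomialHadamard]
  | succ n =>
    rw [PowerSeries.coeff_succ_X_mul, coeff_binomialHadamard, coeff_binomialHadamard,
      coeff_binomialHadamard, backwardShift, PowerSeries.coeff_mk, Ring.multichoose_succ_succ]
    ring

/-- A power series is subexponential if it is the Taylor series of a function of subexponential
growth on a half-strip of size larger than `π / 2`. This is the size for which the half-strip
contains the image of the unit disc under `u ↦ -log (1 - u)`. -/
def IsSubexpSeries (f : ℂ⟦X⟧) : Prop :=
  ∃ r, Real.pi / 2 < r ∧ ∃ F, IsSubexpOn F r ∧ taylorSeries F = f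

namespace IsSubexpSeries

variable {f : ℂ⟦X⟧}

theorem backwardShift (hf : IsSubexpSeries f) : IsSubexpSeries (backwardShift f) := by
  obtain ⟨r, hr, F, hF, rfl⟩ := hf
  have hr₀ : 0 < r := Real.pi_div_two_pos.trans hr
  refine ⟨r, hr, _, hF.dslope hr₀, ?_⟩
  ext n
  rw [_root_.backwardShift, PowerSeries.coeff_mk,
    coeff_taylorSeries_dslope ((hF.dslope hr₀).analyticAt_zero hr₀)]

theorem add_C_mul_X_mul_derivative (hf : IsSubexpSeries f) (a : ℂ) :
    IsSubexpSeries (f + PowerSeries.C a * (PowerSeries.X * PowerSeries.derivative ℂ f)) := by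
  obtain ⟨r, hr, F, hF, rfl⟩ := hf
  obtain ⟨s, hs, hsr⟩ := exists_between hr
  have hs₀ : 0 < s := Real.pi_div_two_pos.trans hs
  have hid : IsSubexpOn (fun t => t) s := by simpa using IsSubexpOn.pow 1 s
  have hF' := hF.deriv hsr
  have hXF' := hid.mul hF'
  have haXF' := (IsSubexpOn.const a s).mul hXF'
  refine ⟨s, hs, _, (hF.mono hsr.le).add haXF', ?_⟩
  rw [taylorSeries_add ((hF.mono hsr.le).analyticAt_zero hs₀) (haXF'.analyticAt_zero hs₀),
    taylorSeries_mul analyticAt_const (hXF'.analyticAt_zero hs₀), taylorSeries_const,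
    taylorSeries_mul (hid.analyticAt_zero hs₀) (hF'.analyticAt_zero hs₀), taylorSeries_id,
    taylorSeries_deriv]

theorem binomialHadamard_natCast_add_one (hf : IsSubexpSeries f) (L : ℕ) :
    IsSubexpSeries (binomialHadamard (L + 1) f) := by
  induction L with
  | zero => simpa [binomialHadamard_one] using hf
  | succ L ih =>
    push_cast
    rw [binomialHadamard_add_one L.cast_add_one_ne_zero]
    exact ih.add_C_mul_X_mul_derivative _

end IsSubexpSeries

/-! ### The substitution `t = -log (1 - u)` -/

theorem re_one_sub_pos {u : ℂ} (hu : ‖u‖ < 1) : 0 < (1 - u).re := by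
  rw [sub_re, one_re, sub_pos]
  exact (re_le_norm u).trans_lt hu

theorem norm_one_sub_pos {u : ℂ} (hu : ‖u‖ < 1) : 0 < ‖1 - u‖ :=
  (re_one_sub_pos hu).trans_le (re_le_norm _)

theorem neg_log_one_sub_mem_halfStrip {u : ℂ} (hu : ‖u‖ < 1) :
    -log (1 - u) ∈ halfStrip (Real.pi / 2) := by
  constructor
  · have hlog := Real.log_le_sub_one_of_pos (norm_one_sub_pos hu)
    have hnorm := norm_sub_le 1 u
    rw [norm_one] at hnorm
    rw [neg_re, log_re]
    linarith [Real.pi_gt_three]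
  · rw [neg_im, abs_neg, log_im]
    exact abs_arg_lt_pi_div_two_iff.2 (Or.inl (re_one_sub_pos hu))

theorem exp_mul_re_neg_log_one_sub {u : ℂ} (hu : ‖u‖ < 1) (ε : ℝ) :
    Real.exp (ε * (-log (1 - u)).re) = ‖1 - u‖ ^ (-ε) := by
  rw [neg_re, log_re, Real.rpow_def_of_pos (norm_one_sub_pos hu), mul_neg, mul_neg, mul_comm]

theorem hasDerivAt_neg_log_one_sub {u : ℂ} (hu : ‖u‖ < 1) :
    HasDerivAt (fun u => -log (1 - u)) (1 - u)⁻¹ u := by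
  have h := ((hasDerivAt_id u).const_sub 1).clog (Or.inl (re_one_sub_pos hu))
  exact h.fun_neg.congr_deriv (by simp [neg_div])

theorem hasDerivAt_comp_neg_log_one_sub {G : ℂ → ℂ} {u : ℂ} (hu : ‖u‖ < 1)
    (hG : DifferentiableOn ℂ G (halfStrip (Real.pi / 2))) :
    HasDerivAt (fun u => G (-log (1 - u))) (deriv G (-log (1 - u)) * (1 - u)⁻¹) u := by
  have hd := hG.differentiableAt
    ((isOpen_halfStrip _).mem_nhds (neg_log_one_sub_mem_halfStrip hu))
  exact hd.hasDerivAt.comp u (hasDerivAt_neg_log_one_sub hu)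

theorem differentiableOn_comp_neg_log_one_sub {G : ℂ → ℂ}
    (hG : DifferentiableOn ℂ G (halfStrip (Real.pi / 2))) :
    DifferentiableOn ℂ (fun u => G (-log (1 - u))) (Metric.ball 0 1) := fun _ hu =>
  (hasDerivAt_comp_neg_log_one_sub (mem_ball_zero_iff.1 hu)
    hG).differentiableAt.differentiableWithinAt

theorem hasDerivAt_one_sub_inv_pow {u : ℂ} (hu : 1 - u ≠ 0) (k : ℕ) :
    HasDerivAt (fun u : ℂ => (1 - u)⁻¹ ^ k) (k * (1 - u)⁻¹ ^ (k + 1)) u := by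
  have hinv : HasDerivAt (fun u : ℂ => (1 - u)⁻¹) ((1 - u)⁻¹ ^ 2) u :=
    (((hasDerivAt_id u).const_sub 1).fun_inv hu).congr_deriv (by simp)
  refine (hinv.fun_pow k).congr_deriv ?_
  cases k <;> simp [pow_succ, mul_assoc]

theorem iteratedDeriv_comp_neg_log_one_sub {G : ℂ → ℂ}
    (hG : DifferentiableOn ℂ G (halfStrip (Real.pi / 2))) (k : ℕ) {u : ℂ} (hu : ‖u‖ < 1) :
    iteratedDeriv k (fun u => G (-log (1 - u))) u = (1 - u)⁻¹ ^ k *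
      ∑ l ∈ Finset.range (k + 1),
        (Nat.stirlingFirst k l : ℂ) * iteratedDeriv l G (-log (1 - u)) := by
  have hderiv (l : ℕ) {u : ℂ} (hu : ‖u‖ < 1) :
      HasDerivAt (fun u => iteratedDeriv l G (-log (1 - u)))
        (iteratedDeriv (l + 1) G (-log (1 - u)) * (1 - u)⁻¹) u := by
    rw [iteratedDeriv_succ]
    refine hasDerivAt_comp_neg_log_one_sub hu ?_
    rw [iteratedDeriv_eq_iterate]
    exact ((hG.analyticOnNhd (isOpen_halfStrip _)).iterated_deriv l).differentiableOn
  induction k generalizing u with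
  | zero => simp
  | succ k ih =>
    have hev : iteratedDeriv k (fun u => G (-log (1 - u))) =ᶠ[𝓝 u] fun u => (1 - u)⁻¹ ^ k *
        ∑ l ∈ Finset.range (k + 1),
          (Nat.stirlingFirst k l : ℂ) * iteratedDeriv l G (-log (1 - u)) := by
      filter_upwards [Metric.isOpen_ball.mem_nhds (mem_ball_zero_iff.2 hu)] with z hz
      exact ih (mem_ball_zero_iff.1 hz)
    have hsum := HasDerivAt.fun_sum fun l (_ : l ∈ Finset.range (k + 1)) =>
      (hderiv l hu).const_mul (Nat.stirlingFirst k l : ℂ)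
    have hpow := hasDerivAt_one_sub_inv_pow (norm_pos_iff.1 (norm_one_sub_pos hu)) k
    rw [iteratedDeriv_succ, hev.deriv_eq, (hpow.fun_mul hsum).deriv, sum_stirlingFirst_succ_mul,
      Finset.mul_sum, Finset.mul_sum, Finset.mul_sum, ← Finset.sum_add_distrib]
    refine Finset.sum_congr rfl fun l _ => ?_
    ring

/-- The number `∑ l, c(k, l) l! fₗ`, where `c(k, l)` are the unsigned Stirling numbers of the first
kind: the `k`-th derivative at the origin of `u ↦ f (-log (1 - u))`. -/
noncomputable def stirlingSum (k : ℕ) (f : ℂ⟦X⟧) : ℂ :=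
  ∑ l ∈ Finset.range (k + 1), (Nat.stirlingFirst k l : ℂ) * (l ! * PowerSeries.coeff l f)

theorem stirlingSum_sub (k : ℕ) (f g : ℂ⟦X⟧) :
    stirlingSum k (f - g) = stirlingSum k f - stirlingSum k g := by
  simp only [stirlingSum, map_sub, mul_sub, Finset.sum_sub_distrib]

theorem stirlingSum_zero (f : ℂ⟦X⟧) : stirlingSum 0 f = PowerSeries.coeff 0 f := by
  simp [stirlingSum]

theorem stirlingSum_taylorSeries {G : ℂ → ℂ}
    (hG : DifferentiableOn ℂ G (halfStrip (Real.pi / 2))) (k : ℕ) :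
    stirlingSum k (taylorSeries G) = iteratedDeriv k (fun u => G (-log (1 - u))) 0 := by
  rw [iteratedDeriv_comp_neg_log_one_sub hG k (by simp)]
  simp [stirlingSum, factorial_mul_coeff_taylorSeries]

/-! ### The growth of Stirling sums -/

theorem norm_iteratedDeriv_zero_le_integral_circle {f : ℂ → ℂ} {R : ℝ} (hR : 0 < R)
    (hf : DifferentiableOn ℂ f (Metric.closedBall 0 R)) (k : ℕ) :
    ‖iteratedDeriv k f 0‖ ≤ k ! *
      (((2 * Real.pi)⁻¹ * ∫ θ in (0 : ℝ)..2 * Real.pi, ‖f (circleMap 0 R θ)‖) * R⁻¹ ^ k) := by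
  lift R to NNReal using hR.le
  have hseries := hf.hasFPowerSeriesOnBall (by exact_mod_cast hR)
  rw [iteratedDeriv_eq_iteratedFDeriv, ← hseries.factorial_smul (1 : ℂ) k, nsmul_eq_mul, norm_mul,
    norm_natCast]
  gcongr
  refine (ContinuousMultilinearMap.le_opNorm _ _).trans ?_
  simpa using norm_cauchyPowerSeries_le f 0 R k

theorem abs_div_three_le_norm_one_sub_circleMap {ρ θ : ℝ} (hρ : 1 / 2 ≤ ρ) (hθ : |θ| ≤ Real.pi) :
    |θ| / 3 ≤ ‖1 - circleMap 0 ρ θ‖ := by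
  have hnorm : ‖1 - circleMap 0 ρ θ‖ ^ 2 = (1 - ρ) ^ 2 + 2 * ρ * (1 - Real.cos θ) := by
    rw [← normSq_eq_norm_sq, normSq_apply]
    simp only [circleMap, zero_add, sub_re, one_re, sub_im, one_im, re_ofReal_mul, im_ofReal_mul,
      exp_ofReal_mul_I_re, exp_ofReal_mul_I_im]
    linear_combination ρ ^ 2 * Real.sin_sq_add_cos_sq θ
  have hcos : θ ^ 2 / 9 ≤ 1 - Real.cos θ := by
    have hpi : (9 : ℝ)⁻¹ ≤ 2 / Real.pi ^ 2 := by
      rw [inv_eq_one_div, div_le_div_iff₀ (by norm_num) (by positivity)]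
      nlinarith [Real.pi_pos, Real.pi_lt_d2]
    have := mul_le_mul_of_nonneg_right hpi (sq_nonneg θ)
    linarith [Real.cos_le_one_sub_mul_cos_sq hθ]
  refine le_of_sq_le_sq ?_ (norm_nonneg _)
  rw [hnorm, div_pow, sq_abs]
  nlinarith [sq_nonneg (1 - ρ), Real.cos_le_one θ]

theorem rpow_sub_one_le_of_div_three_le {ρ η ε : ℝ} (hη : 0 < η) (hε₀ : 0 ≤ ε) (hε₁ : ε ≤ 1)
    (h : η / 3 ≤ ρ) : ρ ^ (ε - 1) ≤ 3 * η ^ (ε - 1) :=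
  calc ρ ^ (ε - 1) ≤ (η / 3) ^ (ε - 1) :=
        Real.rpow_le_rpow_of_nonpos (by positivity) h (by linarith)
    _ = 3 ^ (1 - ε) * η ^ (ε - 1) := by
        rw [Real.div_rpow hη.le (by norm_num), div_eq_mul_inv, ← Real.rpow_neg (by norm_num),
          neg_sub, mul_comm]
    _ ≤ 3 ^ (1 : ℝ) * η ^ (ε - 1) := by
        gcongr
        · norm_num
        · linarith
    _ = 3 * η ^ (ε - 1) := by rw [Real.rpow_one]

/-- An integrable majorant of `θ ↦ ‖1 - ρ exp (iθ)‖ ^ (ε - 1)` on `(0, 2π)` that does not depend on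
`ρ ≥ 1 / 2`. -/
noncomputable def circleMajorant (ε θ : ℝ) : ℝ :=
  3 * (θ ^ (ε - 1) + (2 * Real.pi - θ) ^ (ε - 1))

theorem intervalIntegrable_circleMajorant {ε : ℝ} (hε : 0 < ε) :
    IntervalIntegrable (circleMajorant ε) volume 0 (2 * Real.pi) := by
  have hleft : IntervalIntegrable (fun θ : ℝ => θ ^ (ε - 1)) volume 0 (2 * Real.pi) :=
    intervalIntegral.intervalIntegrable_rpow' (by linarith)
  have hright := hleft.comp_sub_left (2 * Real.pi)
  simp only [sub_zero, sub_self] at hright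
  exact (hleft.add hright.symm).const_mul 3

theorem circleMajorant_nonneg {ε θ : ℝ} (hθ : θ ∈ Icc 0 (2 * Real.pi)) :
    0 ≤ circleMajorant ε θ := by
  have := Real.rpow_nonneg hθ.1 (ε - 1)
  have := Real.rpow_nonneg (sub_nonneg.2 hθ.2) (ε - 1)
  rw [circleMajorant]
  positivity

theorem norm_one_sub_circleMap_rpow_le {ρ θ ε : ℝ} (hρ : 1 / 2 ≤ ρ)
    (hθ : θ ∈ Ioo 0 (2 * Real.pi)) (hε₀ : 0 ≤ ε) (hε₁ : ε ≤ 1) :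
    ‖1 - circleMap 0 ρ θ‖ ^ (ε - 1) ≤ circleMajorant ε θ := by
  have hθ' : 0 < 2 * Real.pi - θ := sub_pos.2 hθ.2
  have hnonneg := Real.rpow_nonneg hθ.1.le (ε - 1)
  have hnonneg' := Real.rpow_nonneg hθ'.le (ε - 1)
  rw [circleMajorant]
  rcases le_total θ Real.pi with hle | hle
  · have h := abs_div_three_le_norm_one_sub_circleMap hρ ((abs_of_pos hθ.1).trans_le hle)
    rw [abs_of_pos hθ.1] at h
    linarith [rpow_sub_one_le_of_div_three_le hθ.1 hε₀ hε₁ h]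
  · have h := abs_div_three_le_norm_one_sub_circleMap (θ := θ - 2 * Real.pi) hρ
      (by rw [abs_sub_comm, abs_of_pos hθ']; linarith)
    rw [abs_sub_comm, abs_of_pos hθ', (periodic_circleMap 0 ρ).sub_eq] at h
    linarith [rpow_sub_one_le_of_div_three_le hθ' hε₀ hε₁ h]

theorem norm_one_sub_circleMap_rpow_mul_inv_le {ρ θ ε : ℝ} (hρ : 1 / 2 ≤ ρ) (hρ₁ : ρ < 1)
    (hθ : θ ∈ Ioo 0 (2 * Real.pi)) (hε₀ : 0 ≤ ε) (hε₁ : ε ≤ 1) :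
    ‖1 - circleMap 0 ρ θ‖ ^ (-ε) * ‖1 - circleMap 0 ρ θ‖⁻¹ ≤
      (1 - ρ)⁻¹ ^ (2 * ε) * circleMajorant ε θ := by
  have hlower : 1 - ρ ≤ ‖1 - circleMap 0 ρ θ‖ := by
    have h := norm_sub_norm_le 1 (circleMap 0 ρ θ)
    rwa [norm_one, norm_circleMap_zero, abs_of_nonneg (by linarith)] at h
  have hmajorant := norm_one_sub_circleMap_rpow_le hρ hθ hε₀ hε₁
  have hρ' : 0 < 1 - ρ := sub_pos.2 hρ₁
  set R := ‖1 - circleMap 0 ρ θ‖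
  have hR : 0 < R := hρ'.trans_le hlower
  calc R ^ (-ε) * R⁻¹ = R⁻¹ ^ (2 * ε) * R ^ (ε - 1) := by
        rw [Real.inv_rpow hR.le, ← Real.rpow_neg hR.le, ← Real.rpow_add hR, ← Real.rpow_neg_one,
          ← Real.rpow_add hR]
        ring_nf
    _ ≤ _ := by gcongr

theorem inv_succ_div_succ_succ_pow_le (k : ℕ) : (((k : ℝ) + 1) / (k + 2))⁻¹ ^ k ≤ 3 := by
  have hinv : (((k : ℝ) + 1) / (k + 2))⁻¹ = 1 / ((k : ℝ) + 1) + 1 := by field_simp; ring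
  calc (((k : ℝ) + 1) / (k + 2))⁻¹ ^ k ≤ Real.exp (1 / ((k : ℝ) + 1)) ^ k := by
        rw [hinv]
        gcongr
        exact Real.add_one_le_exp _
    _ = Real.exp (k * (1 / ((k : ℝ) + 1))) := by rw [Real.exp_nat_mul]
    _ ≤ Real.exp 1 := by
        gcongr
        rw [mul_one_div, div_le_one (by positivity)]
        linarith
    _ ≤ 3 := by linarith [Real.exp_one_lt_d9]

theorem integral_norm_deriv_comp_neg_log_one_sub_le {G : ℂ → ℂ} {M ρ ε : ℝ} (hε₀ : 0 < ε)
    (hε₁ : ε ≤ 1) (hρ : 1 / 2 ≤ ρ) (hρ₁ : ρ < 1)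
    (hG : DifferentiableOn ℂ G (halfStrip (Real.pi / 2))) (hM : 0 ≤ M)
    (hb : ∀ t ∈ halfStrip (Real.pi / 2), ‖deriv G t‖ ≤ M * Real.exp (ε * t.re)) :
    ∫ θ in (0 : ℝ)..2 * Real.pi, ‖deriv (fun u => G (-log (1 - u))) (circleMap 0 ρ θ)‖ ≤
      M * ((1 - ρ)⁻¹ ^ (2 * ε) * ∫ θ in (0 : ℝ)..2 * Real.pi, circleMajorant ε θ) := by
  have hcircle (θ : ℝ) : ‖circleMap 0 ρ θ‖ < 1 := by
    rwa [norm_circleMap_zero, abs_of_nonneg (by linarith)]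
  have hcont := ((differentiableOn_comp_neg_log_one_sub hG).deriv
    Metric.isOpen_ball).continuousOn.comp_continuous (continuous_circleMap 0 ρ)
    fun θ => mem_ball_zero_iff.2 (hcircle θ)
  rw [← intervalIntegral.integral_const_mul, ← intervalIntegral.integral_const_mul]
  refine intervalIntegral.integral_mono_on_of_le_Ioo (by positivity)
    (hcont.norm.intervalIntegrable _ _)
    (((intervalIntegrable_circleMajorant hε₀).const_mul _).const_mul _) fun θ hθ => ?_
  have hderiv := hb _ (neg_log_one_sub_mem_halfStrip (hcircle θ))
  rw [exp_mul_re_neg_log_one_sub (hcircle θ)] at hderiv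
  rw [(hasDerivAt_comp_neg_log_one_sub (hcircle θ) hG).deriv, norm_mul, norm_inv]
  calc ‖deriv G (-log (1 - circleMap 0 ρ θ))‖ * ‖1 - circleMap 0 ρ θ‖⁻¹
      ≤ M * ‖1 - circleMap 0 ρ θ‖ ^ (-ε) * ‖1 - circleMap 0 ρ θ‖⁻¹ := by gcongr
    _ = M * (‖1 - circleMap 0 ρ θ‖ ^ (-ε) * ‖1 - circleMap 0 ρ θ‖⁻¹) := mul_assoc _ _ _
    _ ≤ _ := mul_le_mul_of_nonneg_left
        (norm_one_sub_circleMap_rpow_mul_inv_le hρ hρ₁ hθ hε₀.le hε₁) hM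

theorem norm_stirlingSum_succ_taylorSeries_le {G : ℂ → ℂ} {M ε : ℝ} (hε₀ : 0 < ε) (hε₁ : ε ≤ 1)
    (hG : DifferentiableOn ℂ G (halfStrip (Real.pi / 2))) (hM : 0 ≤ M)
    (hb : ∀ t ∈ halfStrip (Real.pi / 2), ‖deriv G t‖ ≤ M * Real.exp (ε * t.re)) (k : ℕ) :
    ‖stirlingSum (k + 1) (taylorSeries G)‖ ≤
      M * (3 * (2 * Real.pi)⁻¹ * ∫ θ in (0 : ℝ)..2 * Real.pi, circleMajorant ε θ) *
        (k ! * ((k : ℝ) + 2) ^ (2 * ε)) := by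
  -- The radius `1 - 1 / (k + 2)` balances `(1 - ρ)⁻¹` against `ρ⁻¹ ^ k`.
  set ρ : ℝ := ((k : ℝ) + 1) / (k + 2) with hρ_def
  have hρ : 1 / 2 ≤ ρ := by
    rw [hρ_def, div_le_div_iff₀ (by norm_num) (by positivity)]
    linarith [k.cast_nonneg (α := ℝ)]
  have hρ₁ : ρ < 1 := by
    rw [hρ_def, div_lt_one (by positivity)]
    linarith
  have hinv : (1 - ρ)⁻¹ = (k : ℝ) + 2 := by
    rw [hρ_def]
    field_simp
    ring
  have hint := integral_norm_deriv_comp_neg_log_one_sub_le hε₀ hε₁ hρ hρ₁ hG hM hb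
  have hnonneg : 0 ≤ ∫ θ in (0 : ℝ)..2 * Real.pi, circleMajorant ε θ :=
    intervalIntegral.integral_nonneg (by positivity) fun θ => circleMajorant_nonneg
  rw [hinv] at hint
  rw [stirlingSum_taylorSeries hG, iteratedDeriv_succ']
  refine (norm_iteratedDeriv_zero_le_integral_circle (by linarith)
    (((differentiableOn_comp_neg_log_one_sub hG).deriv Metric.isOpen_ball).mono
      (Metric.closedBall_subset_ball hρ₁)) k).trans ?_
  calc _ ≤ (k ! : ℝ) * (((2 * Real.pi)⁻¹ * (M * (((k : ℝ) + 2) ^ (2 * ε) *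
          ∫ θ in (0 : ℝ)..2 * Real.pi, circleMajorant ε θ))) * 3) := by
        gcongr
        exact inv_succ_div_succ_succ_pow_le k
    _ = _ := by ring

theorem IsSubexpOn.exists_norm_comp_ofReal_mul_le {F : ℂ → ℂ} {r ε : ℝ} (hF : IsSubexpOn F r)
    (hε : 0 < ε) : ∃ C, 0 ≤ C ∧ ∀ v ∈ Icc (0 : ℝ) 1, ∀ t ∈ halfStrip r,
      ‖F (v * t)‖ ≤ C * Real.exp (ε * t.re) := by
  obtain ⟨C, hC, hb⟩ := hF.exists_norm_le hε
  refine ⟨C * Real.exp (ε * r), by positivity, fun v hv t ht => ?_⟩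
  have hr : 0 < r := (abs_nonneg _).trans_lt ht.2
  refine (hb _ (ofReal_mul_mem_halfStrip hv.1 hv.2 ht)).trans ?_
  rw [mul_assoc, ← Real.exp_add, ← mul_add, re_ofReal_mul]
  gcongr
  nlinarith [hv.1, hv.2, ht.1]

theorem IsSubexpSeries.exists_norm_stirlingSum_rescale_le {f : ℂ⟦X⟧} (hf : IsSubexpSeries f)
    (p : ℕ) {ε : ℝ} (hε₀ : 0 < ε) (hε₁ : ε ≤ 1) :
    ∃ C, 0 ≤ C ∧ ∀ v ∈ Icc (0 : ℝ) 1, ∀ k : ℕ,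
      ‖stirlingSum (k + 1) (PowerSeries.X ^ p * PowerSeries.rescale (v : ℂ) f)‖ ≤
        C * (k ! * ((k : ℝ) + 2) ^ ε) := by
  obtain ⟨δ, rfl⟩ : ∃ δ, ε = 2 * δ := ⟨ε / 2, by ring⟩
  have hδ : 0 < δ := by linarith
  obtain ⟨r, hr, F, hF, rfl⟩ := hf
  have hr₀ : 0 < r := Real.pi_div_two_pos.trans hr
  have : 0 < r - Real.pi / 2 := sub_pos.2 hr
  obtain ⟨A, hA, hbF⟩ := hF.exists_norm_comp_ofReal_mul_le (ε := δ / 2) (by positivity)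
  obtain ⟨B, hB, hbp⟩ := (IsSubexpOn.pow p r).exists_norm_le (ε := δ / 2) (by positivity)
  have hnonneg : 0 ≤ ∫ θ in (0 : ℝ)..2 * Real.pi, circleMajorant δ θ :=
    intervalIntegral.integral_nonneg (by positivity) fun θ => circleMajorant_nonneg
  refine ⟨B * A * (Real.exp (δ * (r - Real.pi / 2)) / (r - Real.pi / 2)) *
    (3 * (2 * Real.pi)⁻¹ * ∫ θ in (0 : ℝ)..2 * Real.pi, circleMajorant δ θ),
    by positivity, fun v hv k => ?_⟩
  have hFv : DifferentiableOn ℂ (fun t => F (v * t)) (halfStrip r) :=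
    hF.differentiableOn.comp (by fun_prop) fun t => ofReal_mul_mem_halfStrip hv.1 hv.2
  have hG : DifferentiableOn ℂ (fun t => t ^ p * F (v * t)) (halfStrip r) :=
    DifferentiableOn.fun_mul (by fun_prop) hFv
  have hbG (t : ℂ) (ht : t ∈ halfStrip r) :
      ‖t ^ p * F (v * t)‖ ≤ B * A * Real.exp (δ * t.re) := by
    rw [norm_mul, show δ * t.re = δ / 2 * t.re + δ / 2 * t.re by ring, Real.exp_add,
      mul_mul_mul_comm]
    exact mul_le_mul (hbp t ht) (hbF v hv t ht) (norm_nonneg _) (by positivity)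
  rw [← taylorSeries_comp_mul_left,
    ← taylorSeries_pow_mul (hFv.analyticAt (halfStrip_mem_nhds_zero hr₀))]
  exact norm_stirlingSum_succ_taylorSeries_le hδ (by linarith)
    (hG.mono (halfStrip_subset_halfStrip hr.le)) (by positivity)
    (fun t ht => norm_deriv_le_of_norm_le_exp hr hδ.le (by positivity) hG hbG ht) k

/-! ### Beta integrals -/

theorem re_add_natCast_pos {α : ℂ} (hα : 0 < α.re) (n : ℕ) : 0 < (α + n).re := by
  rw [add_re, natCast_re]
  positivity

theorem Gamma_add_natCast_eq {α : ℂ} (hα : 0 < α.re) (n : ℕ) :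
    Gamma (α + n) = n ! * Ring.multichoose α n * Gamma α := by
  rw [multichoose_eq_ascPochhammer_div, mul_div_cancel₀ _ (Nat.cast_ne_zero.2 n.factorial_ne_zero)]
  refine (div_eq_iff (Gamma_ne_zero_of_re_pos hα)).1 (Gamma_add_nat_div_Gamma_eq α fun k hk => ?_)
  rw [hk, neg_re, natCast_re] at hα
  linarith [k.cast_nonneg (α := ℝ)]

theorem betaIntegral_add_natCast_mul_multichoose {α β : ℂ} (hα : 0 < α.re) (hβ : 0 < β.re)
    (n : ℕ) : betaIntegral (α + n) β * Ring.multichoose (α + β) n =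
      Ring.multichoose α n * betaIntegral α β := by
  have hαβ : 0 < (α + β).re := add_pos hα hβ
  have hΓ := Gamma_ne_zero_of_re_pos hαβ
  have hΓn := Gamma_ne_zero_of_re_pos (re_add_natCast_pos hαβ n)
  have hn : (n ! : ℂ) ≠ 0 := Nat.cast_ne_zero.2 n.factorial_ne_zero
  rw [betaIntegral_eq_Gamma_mul_div _ _ (re_add_natCast_pos hα n) hβ,
    betaIntegral_eq_Gamma_mul_div _ _ hα hβ, add_right_comm, div_mul_eq_mul_div, div_eq_iff hΓn,
    Gamma_add_natCast_eq hα, Gamma_add_natCast_eq hαβ]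
  field_simp

theorem betaIntegral_add_natCast_eq_integral (α β : ℂ) (n : ℕ) :
    betaIntegral (α + n) β =
      ∫ v in (0 : ℝ)..1, (v : ℂ) ^ (α - 1) * (1 - (v : ℂ)) ^ (β - 1) * (v : ℂ) ^ n := by
  rw [betaIntegral]
  refine intervalIntegral.integral_congr_ae (.of_forall fun v hv => ?_)
  rw [uIoc_of_le zero_le_one] at hv
  rw [add_sub_right_comm, cpow_add _ _ (ofReal_ne_zero.2 hv.1.ne'), cpow_natCast]
  ring

theorem stirlingSum_binomialHadamard_mul_betaIntegral {α β : ℂ} (hα : 0 < α.re) (hβ : 0 < β.re)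
    (k p : ℕ) (f : ℂ⟦X⟧) :
    stirlingSum k (PowerSeries.X ^ p * binomialHadamard α f) * betaIntegral α β =
      ∫ v in (0 : ℝ)..1, (v : ℂ) ^ (α - 1) * (1 - (v : ℂ)) ^ (β - 1) *
        stirlingSum k (PowerSeries.X ^ p *
          PowerSeries.rescale (v : ℂ) (binomialHadamard (α + β) f)) := by
  have hcoeff (l : ℕ) : IntervalIntegrable (fun v : ℝ => (v : ℂ) ^ (α - 1) *
        (1 - (v : ℂ)) ^ (β - 1) * PowerSeries.coeff l (PowerSeries.X ^ p *
          PowerSeries.rescale (v : ℂ) (binomialHadamard (α + β) f))) volume 0 1 ∧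
      ∫ v in (0 : ℝ)..1, (v : ℂ) ^ (α - 1) * (1 - (v : ℂ)) ^ (β - 1) *
        PowerSeries.coeff l (PowerSeries.X ^ p *
          PowerSeries.rescale (v : ℂ) (binomialHadamard (α + β) f)) =
      PowerSeries.coeff l (PowerSeries.X ^ p * binomialHadamard α f) * betaIntegral α β := by
    simp only [PowerSeries.coeff_X_pow_mul', PowerSeries.coeff_rescale, coeff_binomialHadamard]
    split_ifs with h
    · simp only [← mul_assoc]
      refine ⟨(((betaIntegral_convergent hα hβ).mul_continuousOn (by fun_prop)).mul_const
        _).mul_const _, ?_⟩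
      rw [intervalIntegral.integral_mul_const, intervalIntegral.integral_mul_const,
        ← betaIntegral_add_natCast_eq_integral, betaIntegral_add_natCast_mul_multichoose hα hβ]
      ring
    · simp
  simp only [stirlingSum, Finset.mul_sum, Finset.sum_mul, mul_left_comm (_ * _ : ℂ)]
  rw [intervalIntegral.integral_finsetSum fun l _ => ((hcoeff l).1.const_mul _).const_mul _]
  refine Finset.sum_congr rfl fun l _ => ?_
  rw [intervalIntegral.integral_const_mul, intervalIntegral.integral_const_mul, (hcoeff l).2]
  ring

theorem ofReal_integral_norm_cpow_mul_cpow (α β : ℂ) :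
    ((∫ v in (0 : ℝ)..1, ‖(v : ℂ) ^ (α - 1) * (1 - (v : ℂ)) ^ (β - 1)‖ : ℝ) : ℂ) =
      betaIntegral α.re β.re := by
  rw [← intervalIntegral.integral_ofReal, betaIntegral]
  simp only [intervalIntegral.integral_of_le zero_le_one, integral_Ioc_eq_integral_Ioo]
  refine setIntegral_congr_fun measurableSet_Ioo fun v hv => ?_
  have hv' : 0 < 1 - v := sub_pos.2 hv.2
  rw [← ofReal_one, ← ofReal_sub, norm_mul, norm_cpow_eq_rpow_re_of_pos hv.1,
    norm_cpow_eq_rpow_re_of_pos hv']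
  simp [ofReal_cpow hv.1.le, ofReal_cpow hv'.le]

theorem norm_integral_cpow_mul_cpow_mul_le {α β : ℂ} (hα : 0 < α.re) (hβ : 0 < β.re) {h : ℝ → ℂ}
    {C : ℝ} (hC : ∀ v ∈ Icc (0 : ℝ) 1, ‖h v‖ ≤ C) :
    ‖∫ v in (0 : ℝ)..1, (v : ℂ) ^ (α - 1) * (1 - (v : ℂ)) ^ (β - 1) * h v‖ ≤
      ‖betaIntegral α.re β.re‖ * C := by
  rw [← ofReal_integral_norm_cpow_mul_cpow, norm_real, Real.norm_of_nonneg
    (intervalIntegral.integral_nonneg zero_le_one fun v _ => norm_nonneg _),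
    ← intervalIntegral.integral_mul_const]
  refine intervalIntegral.norm_integral_le_of_norm_le zero_le_one (.of_forall fun v hv => ?_)
    ((betaIntegral_convergent hα hβ).norm.mul_const _)
  rw [norm_mul]
  gcongr
  exact hC v (Ioc_subset_Icc_self hv)

theorem betaIntegral_ne_zero {α β : ℂ} (hα : 0 < α.re) (hβ : 0 < β.re) :
    betaIntegral α β ≠ 0 := by
  rw [betaIntegral_eq_Gamma_mul_div _ _ hα hβ]
  exact div_ne_zero (mul_ne_zero (Gamma_ne_zero_of_re_pos hα) (Gamma_ne_zero_of_re_pos hβ))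
    (Gamma_ne_zero_of_re_pos (add_pos hα hβ))

theorem continuousAt_Gamma_of_re_pos {z : ℂ} (hz : 0 < z.re) : ContinuousAt Gamma z := by
  refine (differentiableAt_Gamma z fun n hn => ?_).continuousAt
  rw [hn, neg_re, natCast_re] at hz
  linarith [n.cast_nonneg (α := ℝ)]

theorem continuousAt_betaIntegral {X : Type*} [TopologicalSpace X] {a b : X → ℂ} {z : X}
    (ha : ContinuousAt a z) (hb : ContinuousAt b z) (haz : 0 < (a z).re) (hbz : 0 < (b z).re) :
    ContinuousAt (fun w => betaIntegral (a w) (b w)) z := by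
  have hquot : ContinuousAt (fun w => Gamma (a w) * Gamma (b w) / Gamma (a w + b w)) z :=
    (((continuousAt_Gamma_of_re_pos haz).comp ha).mul
      ((continuousAt_Gamma_of_re_pos hbz).comp hb)).div
      (ContinuousAt.comp (continuousAt_Gamma_of_re_pos (add_pos haz hbz)) (ha.add hb))
      (Gamma_ne_zero_of_re_pos (add_pos haz hbz))
  refine hquot.congr ?_
  filter_upwards [(continuous_re.continuousAt.comp ha).eventually (lt_mem_nhds haz),
    (continuous_re.continuousAt.comp hb).eventually (lt_mem_nhds hbz)] with w hwa hwb
  exact (betaIntegral_eq_Gamma_mul_div _ _ hwa hwb).symm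

/-! ### Local uniformity in the parameter of the binomial series -/

theorem IsSubexpSeries.eventually_norm_stirlingSum_le_of_re_pos {f : ℂ⟦X⟧}
    (hf : IsSubexpSeries f) (p : ℕ) {ε : ℝ} (hε₀ : 0 < ε) (hε₁ : ε ≤ 1) {α₀ : ℂ}
    (hα₀ : 0 < α₀.re) : ∃ C, ∀ᶠ α in 𝓝 α₀, ∀ k : ℕ,
      ‖stirlingSum (k + 1) (PowerSeries.X ^ p * binomialHadamard α f)‖ ≤
        C * (k ! * ((k : ℝ) + 2) ^ ε) := by
  obtain ⟨L, hL⟩ := exists_nat_gt α₀.re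
  obtain ⟨C, hC, hb⟩ :=
    (hf.binomialHadamard_natCast_add_one L).exists_norm_stirlingSum_rescale_le p hε₀ hε₁
  have hβ₀ : 0 < ((L : ℂ) + 1 - α₀).re := by
    rw [sub_re, add_re, natCast_re, one_re]
    linarith
  have hβcont : Continuous fun α : ℂ => (L : ℂ) + 1 - α := by fun_prop
  have hrecont : Continuous fun α : ℂ => (((L : ℂ) + 1 - α).re : ℂ) := by fun_prop
  have hratio : ContinuousAt (fun α : ℂ => ‖betaIntegral α.re ((L : ℂ) + 1 - α).re‖ /
      ‖betaIntegral α (L + 1 - α)‖) α₀ :=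
    (continuousAt_betaIntegral (continuous_ofReal.comp continuous_re).continuousAt
      hrecont.continuousAt hα₀ hβ₀).norm.div
      (continuousAt_betaIntegral continuousAt_id hβcont.continuousAt hα₀ hβ₀).norm
      (norm_ne_zero_iff.2 (betaIntegral_ne_zero hα₀ hβ₀))
  refine ⟨(‖betaIntegral α₀.re ((L : ℂ) + 1 - α₀).re‖ / ‖betaIntegral α₀ (L + 1 - α₀)‖ + 1) * C,
    ?_⟩
  filter_upwards [hratio.eventually (gt_mem_nhds (lt_add_one _)),
    continuous_re.continuousAt.eventually (lt_mem_nhds hα₀),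
    (continuous_re.comp hβcont).continuousAt.eventually (lt_mem_nhds hβ₀)] with α hlt hα hβ k
  have hbeta : 0 < ‖betaIntegral α (L + 1 - α)‖ := norm_pos_iff.2 (betaIntegral_ne_zero hα hβ)
  have hint := stirlingSum_binomialHadamard_mul_betaIntegral hα hβ (k + 1) p f
  rw [add_sub_cancel] at hint
  have hle := norm_integral_cpow_mul_cpow_mul_le hα hβ (hb · · k)
  rw [← hint, norm_mul, ← le_div_iff₀ hbeta] at hle
  calc _ ≤ _ := hle
    _ = ‖betaIntegral α.re ((L : ℂ) + 1 - α).re‖ / ‖betaIntegral α (L + 1 - α)‖ *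
          (C * (k ! * ((k : ℝ) + 2) ^ ε)) := by ring
    _ ≤ _ := by
        rw [mul_assoc _ C]
        gcongr

theorem IsSubexpSeries.eventually_norm_stirlingSum_le {f : ℂ⟦X⟧} (hf : IsSubexpSeries f) (p : ℕ)
    {ε : ℝ} (hε₀ : 0 < ε) (hε₁ : ε ≤ 1) (α₀ : ℂ) : ∃ C, ∀ᶠ α in 𝓝 α₀, ∀ k : ℕ,
      ‖stirlingSum (k + 1) (PowerSeries.X ^ p * binomialHadamard α f)‖ ≤
        C * (k ! * ((k : ℝ) + 2) ^ ε) := by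
  obtain ⟨n, hn⟩ := exists_nat_gt (-α₀.re)
  replace hn : 0 < α₀.re + n := by linarith
  induction n generalizing α₀ f p with
  | zero => exact hf.eventually_norm_stirlingSum_le_of_re_pos p hε₀ hε₁ (by simpa using hn)
  | succ n ih =>
    have hn' : 0 < (α₀ + 1).re + n := by
      rw [add_re, one_re]
      push_cast at hn
      linarith
    obtain ⟨C, hC⟩ := ih hf p (α₀ + 1) hn'
    obtain ⟨C', hC'⟩ := ih hf.backwardShift (p + 1) (α₀ + 1) hn'
    have hadd : Tendsto (fun α : ℂ => α + 1) (𝓝 α₀) (𝓝 (α₀ + 1)) :=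
      (continuous_add_const 1).tendsto α₀
    refine ⟨C + C', ?_⟩
    filter_upwards [hadd.eventually hC, hadd.eventually hC'] with α h h' k
    rw [binomialHadamard_eq_sub, mul_sub, ← mul_assoc, ← pow_succ, stirlingSum_sub, add_mul]
    exact (norm_sub_le _ _).trans (add_le_add (h k) (h' k))

/-! ### The generating function of the Bernoulli polynomials -/

/-- The exponential generating series `∑ Bₙ(b) Xⁿ / n!` of the Bernoulli polynomials. -/
noncomputable def bernoulliSeries (b : ℝ) : ℂ⟦X⟧ :=
  PowerSeries.mk fun n => (bernPoly n b : ℂ) / n !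

/-- The generating function `t e^{bt} / (e^t - 1)` of the Bernoulli polynomials; writing
`(e^t - 1) / t` as a `dslope` gives it the right value at the removable singularity `t = 0`. -/
noncomputable def bernoulliGenFun (b : ℝ) (t : ℂ) : ℂ :=
  exp (b * t) / dslope exp 0 t

theorem differentiable_dslope_exp : Differentiable ℂ (dslope exp 0) :=
  differentiableOn_univ.1
    ((Complex.differentiableOn_dslope univ_mem).2 differentiable_exp.differentiableOn)

theorem mul_dslope_exp (t : ℂ) : t * dslope exp 0 t = exp t - 1 := by
  simpa using sub_smul_dslope exp 0 t

theorem dslope_exp_ne_zero {t : ℂ} (ht : |t.im| < 2 * Real.pi) : dslope exp 0 t ≠ 0 := by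
  intro h
  have hexp := mul_dslope_exp t
  rw [h, mul_zero, eq_comm, sub_eq_zero] at hexp
  obtain ⟨n, rfl⟩ := exp_eq_one_iff.1 hexp
  have hn : n = 0 := by
    have him : ((n : ℂ) * (2 * Real.pi * I)).im = n * (2 * Real.pi) := by simp
    rw [him, abs_mul, abs_of_pos Real.two_pi_pos, mul_lt_iff_lt_one_left Real.two_pi_pos] at ht
    exact Int.abs_lt_one_iff.1 (by exact_mod_cast ht)
  simp [hn, dslope_same] at h

theorem differentiableOn_bernoulliGenFun (b : ℝ) :
    DifferentiableOn ℂ (bernoulliGenFun b) (halfStrip (2 * Real.pi)) :=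
  DifferentiableOn.fun_div (by fun_prop) differentiable_dslope_exp.differentiableOn
    fun _ ht => dslope_exp_ne_zero ht.2

theorem norm_bernoulliGenFun_le_two_mul_norm {b : ℝ} (hb : b ≤ 1) {t : ℂ} (ht : 1 ≤ t.re) :
    ‖bernoulliGenFun b t‖ ≤ 2 * ‖t‖ := by
  have htwo : 2 ≤ Real.exp t.re := by linarith [Real.add_one_le_exp t.re]
  have hden : Real.exp t.re / 2 ≤ ‖t‖ * ‖dslope exp 0 t‖ := by
    have hsub := norm_sub_norm_le (exp t) 1
    rw [norm_exp, norm_one] at hsub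
    rw [← norm_mul, mul_dslope_exp]
    linarith
  have hpos : 0 < ‖dslope exp 0 t‖ :=
    (norm_nonneg _).lt_of_ne' fun h => by rw [h, mul_zero] at hden; linarith
  have hnum : Real.exp (b * t.re) ≤ Real.exp t.re := by
    gcongr
    exact mul_le_of_le_one_left (by linarith) hb
  rw [bernoulliGenFun, norm_div, div_le_iff₀ hpos, norm_exp, re_ofReal_mul]
  linarith

theorem isSubexpOn_bernoulliGenFun {b : ℝ} (hb : b ≤ 1) : IsSubexpOn (bernoulliGenFun b) 3 := by
  have h3 : (3 : ℝ) < 2 * Real.pi := by linarith [Real.pi_gt_three]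
  have hd := differentiableOn_bernoulliGenFun b
  refine ⟨hd.mono (halfStrip_subset_halfStrip h3.le), fun ε hε => ?_⟩
  let K : Set ℂ := Icc (-3) 1 ×ℂ Icc (-3) 3
  have hK : K ⊆ halfStrip (2 * Real.pi) := fun t ht =>
    ⟨by linarith [ht.1.1], (abs_le.2 ht.2).trans_lt h3⟩
  obtain ⟨A, hA⟩ := (isCompact_Icc.reProdIm isCompact_Icc).exists_bound_of_continuousOn
    (hd.continuousOn.mono hK)
  have hnear : bernoulliGenFun b =O[𝓟 (halfStrip 3 ∩ {t | t.re ≤ 1})] fun _ => (1 : ℝ) :=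
    Asymptotics.isBigO_principal.2 ⟨A, fun t ht => by
      simpa using hA t ⟨⟨ht.1.1.le, ht.2⟩, abs_le.1 ht.1.2.le⟩⟩
  have hfar : bernoulliGenFun b =O[𝓟 (halfStrip 3 ∩ {t | 1 ≤ t.re})] fun t => t ^ 1 :=
    Asymptotics.isBigO_principal.2 ⟨2, fun t ht => by
      simpa using norm_bernoulliGenFun_le_two_mul_norm hb ht.2⟩
  have hcover : halfStrip 3 = halfStrip 3 ∩ {t | t.re ≤ 1} ∪ halfStrip 3 ∩ {t | 1 ≤ t.re} := by
    rw [← inter_union_distrib_left, inter_eq_left.2 fun t _ => le_total t.re 1]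
  rw [hcover, ← sup_principal, Asymptotics.isBigO_sup]
  refine ⟨hnear.trans ?_, hfar.trans ?_⟩
  · refine Asymptotics.IsBigO.mono ?_ (principal_mono.2 inter_subset_left)
    exact ((IsSubexpOn.const 1 3).isBigO ε hε).norm_left.congr_left (by simp)
  · exact ((IsSubexpOn.pow 1 3).isBigO ε hε).mono (principal_mono.2 inter_subset_left)

theorem taylorSeries_exp : taylorSeries exp = PowerSeries.exp ℂ := by
  ext n
  rw [coeff_taylorSeries, PowerSeries.coeff_exp, iteratedDeriv_eq_iterate, iter_deriv_exp,
    exp_zero]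
  simp

theorem aeval_bernoulli (n : ℕ) (b : ℝ) :
    Polynomial.aeval (b : ℂ) (Polynomial.bernoulli n) = bernPoly n b := by
  rw [Polynomial.bernoulli, bernPoly, map_sum, ofReal_sum]
  refine Finset.sum_congr rfl fun k _ => ?_
  rw [Polynomial.aeval_monomial]
  push_cast [eq_ratCast]
  ring

theorem bernoulliSeries_mul_exp_sub_one (b : ℝ) :
    bernoulliSeries b * (PowerSeries.exp ℂ - 1) =
      PowerSeries.X * PowerSeries.rescale (b : ℂ) (PowerSeries.exp ℂ) := by
  rw [← Polynomial.bernoulli_generating_function, bernoulliSeries]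
  congr
  ext n
  rw [map_smul, aeval_bernoulli, Rat.smul_def]
  push_cast
  ring

theorem taylorSeries_bernoulliGenFun (b : ℝ) :
    taylorSeries (bernoulliGenFun b) = bernoulliSeries b := by
  have hmem := halfStrip_mem_nhds_zero Real.two_pi_pos
  have hslope := differentiable_dslope_exp.analyticAt 0
  have hexp := taylorSeries_eq_X_mul_dslope_add hslope
  rw [taylorSeries_exp, exp_zero, map_one] at hexp
  have hprod : taylorSeries (bernoulliGenFun b) * taylorSeries (dslope exp 0) =
      PowerSeries.rescale (b : ℂ) (PowerSeries.exp ℂ) := by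
    rw [← taylorSeries_mul ((differentiableOn_bernoulliGenFun b).analyticAt hmem) hslope,
      ← taylorSeries_exp, ← taylorSeries_comp_mul_left]
    ext n
    rw [coeff_taylorSeries, coeff_taylorSeries]
    congr 1
    refine EventuallyEq.iteratedDeriv_eq n ?_
    filter_upwards [hmem] with t ht
    exact div_mul_cancel₀ _ (dslope_exp_ne_zero ht.2)
  have hne : PowerSeries.exp ℂ - 1 ≠ 0 := fun h => by
    simpa using congrArg (PowerSeries.coeff 1) h
  refine mul_right_cancel₀ hne ?_
  rw [bernoulliSeries_mul_exp_sub_one, ← hprod]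
  conv_lhs => rw [hexp]
  ring

theorem isSubexpSeries_bernoulliSeries {b : ℝ} (hb : b ≤ 1) :
    IsSubexpSeries (bernoulliSeries b) :=
  ⟨3, by linarith [Real.pi_lt_four], bernoulliGenFun b, isSubexpOn_bernoulliGenFun hb,
    taylorSeries_bernoulliGenFun b⟩

/-! ### Inverse factorial series -/

theorem norm_risingProd_ofReal {x : ℝ} (hx : 0 < x) (k : ℕ) :
    ‖risingProd (x : ℂ) k‖ = risingProdR x k := by
  rw [risingProd, risingProdR, norm_prod]
  refine Finset.prod_congr rfl fun i _ => ?_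
  rw [show (x : ℂ) + i + 1 = ((x + i + 1 : ℝ) : ℂ) by push_cast; rfl, norm_real,
    Real.norm_of_nonneg (by positivity)]

theorem factorial_mul_rpow_le_risingProdR {x y : ℝ} (hy₀ : 0 ≤ y) (hy₁ : y ≤ 1)
    (hyx : y ≤ x) (k : ℕ) : k ! * ((k : ℝ) + 1) ^ y ≤ risingProdR x k := by
  induction k with
  | zero => simp [risingProdR]
  | succ k ih =>
    rw [risingProdR, Finset.prod_range_succ, ← risingProdR]
    have hbern : (1 + 1 / ((k : ℝ) + 1)) ^ y ≤ 1 + y * (1 / ((k : ℝ) + 1)) :=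
      rpow_one_add_le_one_add_mul_self (neg_one_lt_zero.le.trans (by positivity))
        hy₀ hy₁
    have hstep : ((k : ℝ) + 1) * (1 + 1 / ((k : ℝ) + 1)) ^ y ≤ x + k + 1 := calc
      _ ≤ ((k : ℝ) + 1) * (1 + y * (1 / ((k : ℝ) + 1))) := by gcongr
      _ = k + 1 + y := by field_simp
      _ ≤ x + k + 1 := by linarith
    have hsplit : ((k + 1 : ℕ) : ℝ) + 1 = ((k : ℝ) + 1) * (1 + 1 / ((k : ℝ) + 1)) := by
      push_cast
      field_simp
    calc ((k + 1)! : ℝ) * (((k + 1 : ℕ) : ℝ) + 1) ^ y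
        = k ! * ((k : ℝ) + 1) ^ y * (((k : ℝ) + 1) * (1 + 1 / ((k : ℝ) + 1)) ^ y) := by
          rw [hsplit, Real.mul_rpow (by positivity) (by positivity), Nat.factorial_succ]
          push_cast
          ring
      _ ≤ risingProdR x k * (x + k + 1) := by
          gcongr
          exact le_trans (by positivity) ih

theorem summable_factorial_mul_rpow_div_norm_risingProd {x ε : ℝ} (hx : 0 < x)
    (hε : ε < min x 1) :
    Summable fun k : ℕ => k ! * ((k : ℝ) + 2) ^ ε / ‖risingProd (x : ℂ) (k + 1)‖ := by
  set y := min x 1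
  have hy : 0 < y := lt_min hx one_pos
  have hsum : Summable fun k : ℕ => 2 * ((k : ℝ) + 2) ^ (ε - y - 1) := by
    refine Summable.mul_left 2 ?_
    simpa using (summable_nat_add_iff 2).2
      (Real.summable_nat_rpow.2 (by linarith : ε - y - 1 < -1))
  refine .of_nonneg_of_le (fun k => by positivity) (fun k => ?_) hsum
  have hlower := factorial_mul_rpow_le_risingProdR hy.le (min_le_right _ _) (min_le_left _ _)
    (k + 1)
  rw [← norm_risingProd_ofReal hx, Nat.factorial_succ] at hlower
  push_cast [add_assoc, one_add_one_eq_two] at hlower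
  rw [div_le_iff₀ (lt_of_lt_of_le (by positivity) hlower)]
  calc (k ! : ℝ) * ((k : ℝ) + 2) ^ ε
      = k ! * (((k : ℝ) + 2) * ((k : ℝ) + 2) ^ (ε - y - 1) * ((k : ℝ) + 2) ^ y) := by
        rw [← Real.rpow_one_add' (by positivity) (by linarith), ← Real.rpow_add (by positivity)]
        ring_nf
    _ ≤ k ! * (2 * ((k : ℝ) + 1) * ((k : ℝ) + 2) ^ (ε - y - 1) * ((k : ℝ) + 2) ^ y) := by
        gcongr
        linarith [k.cast_nonneg (α := ℝ)]
    _ = 2 * ((k : ℝ) + 2) ^ (ε - y - 1) * (((k : ℝ) + 1) * k ! * ((k : ℝ) + 2) ^ y) := by ring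
    _ ≤ _ := by gcongr

theorem IsSubexpSeries.exists_summable_stirlingSum_le {f : ℂ⟦X⟧} (hf : IsSubexpSeries f) {x : ℝ}
    (hx : 0 < x) (α₀ : ℂ) : ∃ u : ℕ → ℝ, Summable u ∧ ∀ᶠ α in 𝓝 α₀, ∀ k,
      ‖stirlingSum (k + 1) (binomialHadamard α f) / risingProd (x : ℂ) (k + 1)‖ ≤ u k := by
  have hpos : 0 < min x 1 := lt_min hx one_pos
  obtain ⟨C, hC⟩ := hf.eventually_norm_stirlingSum_le 0 (half_pos hpos)
    (by linarith [min_le_right x 1]) α₀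
  refine ⟨_, (summable_factorial_mul_rpow_div_norm_risingProd hx (half_lt_self hpos)).mul_left C,
    hC.mono fun α h k => ?_⟩
  specialize h k
  rw [pow_zero, one_mul] at h
  rw [norm_div, ← mul_div_assoc]
  gcongr

theorem IsSubexpSeries.summable_norm_stirlingSum_div_risingProd {f : ℂ⟦X⟧}
    (hf : IsSubexpSeries f) {x : ℝ} (hx : 0 < x) (α : ℂ) :
    Summable fun k : ℕ =>
      ‖stirlingSum (k + 1) (binomialHadamard α f) / risingProd (x : ℂ) (k + 1)‖ := by
  obtain ⟨u, hu, hbound⟩ := hf.exists_summable_stirlingSum_le hx α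
  exact .of_nonneg_of_le (fun _ => norm_nonneg _) hbound.self_of_nhds hu

theorem differentiable_stirlingSum_binomialHadamard (k : ℕ) (f : ℂ⟦X⟧) :
    Differentiable ℂ fun α => stirlingSum k (binomialHadamard α f) := by
  simp only [stirlingSum, coeff_binomialHadamard, multichoose_eq_ascPochhammer_div]
  fun_prop

theorem IsSubexpSeries.differentiable_tsum_stirlingSum_div_risingProd {f : ℂ⟦X⟧}
    (hf : IsSubexpSeries f) {x : ℝ} (hx : 0 < x) :
    Differentiable ℂ fun α =>
      ∑' k : ℕ, stirlingSum (k + 1) (binomialHadamard α f) / risingProd (x : ℂ) (k + 1) := by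
  intro α₀
  obtain ⟨u, hu, hbound⟩ := hf.exists_summable_stirlingSum_le hx α₀
  obtain ⟨U, hU, hUopen, hα₀⟩ := eventually_nhds_iff.1 hbound
  exact (differentiableOn_tsum_of_summable_norm hu
    (fun k => ((differentiable_stirlingSum_binomialHadamard _ f).div_const _).differentiableOn)
    hUopen fun k α hα => hU α hα k).differentiableAt (hUopen.mem_nhds hα₀)

theorem neg_one_pow_mul_sum_cchoose_mul_S1 (m : ℂ) (b : ℝ) (k : ℕ) :
    (-1 : ℂ) ^ (k + 1) * (∑ l ∈ Finset.Icc 1 (k + 1),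
        cchoose (m + 1) l * (S1 (k + 1) l : ℂ) * (bernPoly l b : ℂ)) =
      stirlingSum (k + 1) (binomialHadamard (-(m + 1)) (bernoulliSeries b)) := by
  rw [stirlingSum, Finset.sum_range_succ', Nat.stirlingFirst_succ_zero, Nat.cast_zero, zero_mul,
    add_zero, ← Finset.Ico_add_one_right_eq_Icc, Finset.sum_Ico_eq_sum_range, Finset.mul_sum]
  refine Finset.sum_congr rfl fun j _ => ?_
  have hsign : (-1 : ℂ) ^ (k + 1) * (-1) ^ (j + 1) * (-1) ^ (k + 1 + (j + 1)) = 1 := by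
    rw [← pow_add, ← pow_add]
    exact Even.neg_one_pow ⟨k + 1 + (j + 1), by ring⟩
  rw [add_comm 1 j, cchoose_eq_multichoose, S1, stirling1Unsigned_eq_stirlingFirst,
    coeff_binomialHadamard, bernoulliSeries, PowerSeries.coeff_mk]
  push_cast
  rw [mul_left_comm (_ ! : ℂ), mul_div_cancel₀ _ (Nat.cast_ne_zero.2 (j + 1).factorial_ne_zero)]
  linear_combination (Ring.multichoose (-(m + 1)) (j + 1) * Nat.stirlingFirst (k + 1) (j + 1) *
    bernPoly (j + 1) b) * hsign

/-! ### Factorial series as Laplace transforms -/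

theorem hasSum_mul_integral_of_nonneg {X ι : Type*} [MeasurableSpace X] [Countable ι]
    {μ : Measure X} {a : ι → ℂ} {K : ι → X → ℝ} {S : X → ℂ} (hK : ∀ i, Integrable (K i) μ)
    (hK₀ : ∀ i, 0 ≤ᵐ[μ] K i) (hsum : Summable fun i => ‖a i * (∫ x, K i x ∂μ : ℝ)‖)
    (hS : ∀ᵐ x ∂μ, HasSum (fun i => a i * K i x) (S x)) :
    HasSum (fun i => a i * (∫ x, K i x ∂μ : ℝ)) (∫ x, S x ∂μ) := by
  have hnorm (i : ι) : ∫ x, ‖a i * K i x‖ ∂μ = ‖a i * (∫ x, K i x ∂μ : ℝ)‖ := by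
    simp only [norm_mul, norm_real]
    rw [integral_const_mul, Real.norm_of_nonneg (integral_nonneg_of_ae (hK₀ i)),
      integral_congr_ae ((hK₀ i).mono fun x hx => Real.norm_of_nonneg hx)]
  have hint (i : ι) : Integrable (fun x => a i * (K i x : ℂ)) μ := (hK i).ofReal.const_mul (a i)
  have hswap := hasSum_integral_of_summable_integral_norm hint (by simpa only [hnorm] using hsum)
  rw [integral_congr_ae (hS.mono fun x hx => hx.tsum_eq)] at hswap
  refine hswap.congr_fun fun i => ?_
  rw [integral_const_mul, integral_complex_ofReal]

theorem risingProdR_succ_eq_mul_add_one (y : ℝ) (k : ℕ) :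
    risingProdR y (k + 1) = (y + 1) * risingProdR (y + 1) k := by
  rw [risingProdR, risingProdR, Finset.prod_range_succ', mul_comm]
  congr 1
  · simp
  · refine Finset.prod_congr rfl fun i _ => ?_
    push_cast
    ring

theorem risingProdR_pos {y : ℝ} (hy : 0 < y) (k : ℕ) : 0 < risingProdR y k :=
  Finset.prod_pos fun i _ => by positivity

theorem ofReal_risingProdR (y : ℝ) (k : ℕ) : (risingProdR y k : ℂ) = risingProd y k := by
  simp [risingProdR, risingProd]

theorem one_sub_exp_neg_mem_Icc {t : ℝ} (ht : 0 ≤ t) : 1 - Real.exp (-t) ∈ Icc (0 : ℝ) 1 :=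
  ⟨sub_nonneg.2 (Real.exp_le_one_iff.2 (neg_nonpos.2 ht)), sub_le_self _ (Real.exp_pos _).le⟩

theorem integrableOn_one_sub_exp_neg_pow_mul_exp {y : ℝ} (hy : 0 < y) (k : ℕ) :
    IntegrableOn (fun t : ℝ => (1 - Real.exp (-t)) ^ k * Real.exp (-y * t)) (Ioi 0) := by
  refine (exp_neg_integrableOn_Ioi 0 hy).mono'
    (Continuous.aestronglyMeasurable (by fun_prop)) ?_
  filter_upwards [ae_restrict_mem measurableSet_Ioi] with t ht
  obtain ⟨hnonneg, hle⟩ := one_sub_exp_neg_mem_Icc (le_of_lt ht)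
  rw [Real.norm_of_nonneg (by positivity)]
  exact mul_le_of_le_one_left (Real.exp_pos _).le (pow_le_one₀ hnonneg hle)

theorem integral_one_sub_exp_neg_pow_mul_exp {y : ℝ} (hy : 0 < y) (k : ℕ) :
    ∫ t in Ioi (0 : ℝ), (1 - Real.exp (-t)) ^ k * Real.exp (-y * t) =
      k ! / (y * risingProdR y k) := by
  induction k generalizing y with
  | zero =>
    simp only [pow_zero, one_mul, integral_exp_mul_Ioi (neg_lt_zero.2 hy)]
    simp [risingProdR]
  | succ k ih =>
    have hy₁ : 0 < y + 1 := by positivity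
    have hdiff (t : ℝ) : (1 - Real.exp (-t)) ^ (k + 1) * Real.exp (-y * t) =
        (1 - Real.exp (-t)) ^ k * Real.exp (-y * t) -
          (1 - Real.exp (-t)) ^ k * Real.exp (-(y + 1) * t) := by
      rw [show -(y + 1) * t = -t + -y * t by ring, Real.exp_add]
      ring
    simp only [hdiff]
    rw [integral_sub (integrableOn_one_sub_exp_neg_pow_mul_exp hy k)
      (integrableOn_one_sub_exp_neg_pow_mul_exp hy₁ k), ih hy, ih hy₁,
      ← risingProdR_succ_eq_mul_add_one, risingProdR, risingProdR, Finset.prod_range_succ,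
      ← risingProdR, Nat.factorial_succ]
    have hprod := risingProdR_pos hy k
    have : 0 < y + k + 1 := by positivity
    field_simp
    push_cast
    ring

theorem hasSum_stirlingSum_taylorSeries {G : ℂ → ℂ}
    (hG : DifferentiableOn ℂ G (halfStrip (Real.pi / 2))) {t : ℝ} (ht : 0 < t) :
    HasSum (fun k : ℕ => stirlingSum k (taylorSeries G) / k ! * (1 - exp (-t)) ^ k) (G t) := by
  obtain ⟨hnonneg, -⟩ := one_sub_exp_neg_mem_Icc ht.le
  have hmem : ((1 - Real.exp (-t) : ℝ) : ℂ) ∈ Metric.ball (0 : ℂ) 1 := by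
    rw [mem_ball_zero_iff, norm_real, Real.norm_of_nonneg hnonneg]
    exact sub_lt_self _ (Real.exp_pos _)
  have htaylor := hasSum_taylorSeries_on_ball (differentiableOn_comp_neg_log_one_sub hG) hmem
  have hlog : -log (1 - ((1 - Real.exp (-t) : ℝ) : ℂ)) = t := by
    rw [← ofReal_one, ← ofReal_sub, sub_sub_cancel, ← ofReal_log (Real.exp_pos _).le,
      Real.log_exp, ofReal_neg, neg_neg]
  simp only [hlog, sub_zero, smul_eq_mul, ← stirlingSum_taylorSeries hG] at htaylor
  refine htaylor.congr_fun fun k => ?_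
  push_cast
  ring

theorem hasSum_stirlingSum_div_risingProd {G : ℂ → ℂ}
    (hG : DifferentiableOn ℂ G (halfStrip (Real.pi / 2))) {y : ℝ} (hy : 0 < y)
    (hsum : Summable fun k => ‖stirlingSum k (taylorSeries G) / risingProd (y : ℂ) k‖) :
    HasSum (fun k => stirlingSum k (taylorSeries G) / risingProd (y : ℂ) k)
      (∫ t in Ioi (0 : ℝ), y * exp (-y * t) * G t) := by
  have hterm (k : ℕ) : stirlingSum k (taylorSeries G) / risingProd (y : ℂ) k =
      y * (stirlingSum k (taylorSeries G) / k !) *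
        (∫ t in Ioi (0 : ℝ), (1 - Real.exp (-t)) ^ k * Real.exp (-y * t) : ℝ) := by
    have hk : (k ! : ℂ) ≠ 0 := Nat.cast_ne_zero.2 k.factorial_ne_zero
    have hy' : (y : ℂ) ≠ 0 := ofReal_ne_zero.2 hy.ne'
    have hprod : (risingProdR y k : ℂ) ≠ 0 := ofReal_ne_zero.2 (risingProdR_pos hy k).ne'
    rw [integral_one_sub_exp_neg_pow_mul_exp hy, ← ofReal_risingProdR]
    push_cast
    field_simp
  simp only [hterm] at hsum ⊢
  refine hasSum_mul_integral_of_nonneg (integrableOn_one_sub_exp_neg_pow_mul_exp hy)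
    (fun k => ?_) hsum ?_ <;> filter_upwards [ae_restrict_mem measurableSet_Ioi] with t ht
  · exact mul_nonneg (pow_nonneg (one_sub_exp_neg_mem_Icc (le_of_lt ht)).1 k) (Real.exp_pos _).le
  · refine ((hasSum_stirlingSum_taylorSeries hG ht).mul_left (y * exp (-y * t))).congr_fun
      fun k => ?_
    push_cast
    ring

theorem IsSubexpSeries.exists_summable_stirlingSum_rescale_le {f : ℂ⟦X⟧}
    (hf : IsSubexpSeries f) {y : ℝ} (hy : 0 < y) : ∃ u : ℕ → ℝ, Summable u ∧
      ∀ v ∈ Icc (0 : ℝ) 1, ∀ k,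
        ‖stirlingSum k (PowerSeries.rescale (v : ℂ) f) / risingProd (y : ℂ) k‖ ≤ u k := by
  have hpos : 0 < min y 1 := lt_min hy one_pos
  obtain ⟨C, -, hC⟩ := hf.exists_norm_stirlingSum_rescale_le 0 (half_pos hpos)
    (by linarith [min_le_right y 1])
  refine ⟨fun k => k.casesOn ‖PowerSeries.coeff 0 f‖ fun k =>
      C * (k ! * ((k : ℝ) + 2) ^ (min y 1 / 2) / ‖risingProd (y : ℂ) (k + 1)‖),
    (summable_nat_add_iff 1).1 ?_, fun v hv k => ?_⟩
  · exact (summable_factorial_mul_rpow_div_norm_risingProd hy (half_lt_self hpos)).mul_left C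
  · rcases k with _ | k
    · simp [stirlingSum_zero, risingProd, PowerSeries.coeff_rescale]
    · have h := hC v hv k
      rw [pow_zero, one_mul] at h
      simp only [norm_div, ← mul_div_assoc]
      gcongr

theorem IsSubexpOn.hasSum_stirlingSum_rescale {F : ℂ → ℂ} {r : ℝ} (hF : IsSubexpOn F r)
    (hr : Real.pi / 2 < r) {y : ℝ} (hy : 0 < y) {v : ℝ} (hv : v ∈ Icc (0 : ℝ) 1) :
    HasSum (fun k =>
        stirlingSum k (PowerSeries.rescale (v : ℂ) (taylorSeries F)) / risingProd (y : ℂ) k)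
      (∫ t in Ioi (0 : ℝ), y * exp (-y * t) * F (v * t)) := by
  obtain ⟨u, hu, hbound⟩ :=
    IsSubexpSeries.exists_summable_stirlingSum_rescale_le ⟨r, hr, F, hF, rfl⟩ hy
  have hG : DifferentiableOn ℂ (fun t => F (v * t)) (halfStrip (Real.pi / 2)) :=
    hF.differentiableOn.comp (by fun_prop) fun t ht =>
      halfStrip_subset_halfStrip hr.le (ofReal_mul_mem_halfStrip hv.1 hv.2 ht)
  have hsum : Summable fun k =>
      ‖stirlingSum k (PowerSeries.rescale (v : ℂ) (taylorSeries F)) / risingProd (y : ℂ) k‖ :=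
    .of_nonneg_of_le (fun _ => norm_nonneg _) (hbound v hv) hu
  rw [← taylorSeries_comp_mul_left] at hsum ⊢
  exact hasSum_stirlingSum_div_risingProd hG hy hsum

theorem continuous_stirlingSum_rescale (k : ℕ) (f : ℂ⟦X⟧) :
    Continuous fun v : ℝ => stirlingSum k (PowerSeries.rescale (v : ℂ) f) := by
  simp only [stirlingSum, PowerSeries.coeff_rescale]
  fun_prop

theorem IsSubexpOn.hasSum_stirlingSum_binomialHadamard {F : ℂ → ℂ} {r : ℝ} (hF : IsSubexpOn F r)
    (hr : Real.pi / 2 < r) {y : ℝ} (hy : 0 < y) {α : ℂ} (hα₀ : 0 < α.re) (hα₁ : α.re < 1) :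
    HasSum (fun k => stirlingSum k (binomialHadamard α (taylorSeries F)) *
        betaIntegral α (1 - α) / risingProd (y : ℂ) k)
      (∫ v in (0 : ℝ)..1, (v : ℂ) ^ (α - 1) * (1 - (v : ℂ)) ^ (1 - α - 1) *
        ∫ t in Ioi (0 : ℝ), y * exp (-y * t) * F (v * t)) := by
  have hβ : 0 < (1 - α).re := by simpa using hα₁
  obtain ⟨u, hu, hbound⟩ :=
    IsSubexpSeries.exists_summable_stirlingSum_rescale_le ⟨r, hr, F, hF, rfl⟩ hy
  have hweight := betaIntegral_convergent hα₀ hβ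
  set weight : ℝ → ℂ := fun v => (v : ℂ) ^ (α - 1) * (1 - (v : ℂ)) ^ (1 - α - 1)
  set term : ℕ → ℝ → ℂ := fun k v => weight v *
    (stirlingSum k (PowerSeries.rescale (v : ℂ) (taylorSeries F)) / risingProd (y : ℂ) k)
  have hIoc : uIoc (0 : ℝ) 1 ⊆ Icc 0 1 := uIoc_subset_uIcc.trans (uIcc_of_le zero_le_one).subset
  have hterm (k : ℕ) : stirlingSum k (binomialHadamard α (taylorSeries F)) *
      betaIntegral α (1 - α) / risingProd (y : ℂ) k = ∫ v in (0 : ℝ)..1, term k v := by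
    have h := stirlingSum_binomialHadamard_mul_betaIntegral hα₀ hβ k 0 (taylorSeries F)
    simp only [pow_zero, one_mul, add_sub_cancel, binomialHadamard_one] at h
    simp only [h, term, weight, ← mul_div_assoc, intervalIntegral.integral_div]
  simp only [hterm]
  refine intervalIntegral.hasSum_integral_of_dominated_convergence
    (fun k v => ‖weight v‖ * u k) (fun k => ?_) (fun k => .of_forall fun v hv => ?_)
    (.of_forall fun v _ => hu.mul_left _) ?_ (.of_forall fun v hv => ?_)
  · have hcont := (continuous_stirlingSum_rescale k (taylorSeries F)).div_const
      (risingProd (y : ℂ) k)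
    exact (hweight.mul_continuousOn hcont.continuousOn).def'.aestronglyMeasurable
  · rw [norm_mul]
    gcongr
    exact hbound v (hIoc hv) k
  · simp only [tsum_mul_left]
    exact hweight.norm.mul_const _
  · exact (hF.hasSum_stirlingSum_rescale hr hy (hIoc hv)).mul_left _

/-! ### Evaluation at the Bernoulli series -/

theorem hasSum_bernoulliGenFun (b : ℝ) {τ : ℝ} (hτ : 0 < τ) :
    HasSum (fun n : ℕ => (τ : ℂ) * exp (-(n + 1 - b) * τ)) (bernoulliGenFun b τ) := by
  have hlt : ‖exp (-τ : ℂ)‖ < 1 := by simpa [norm_exp] using hτ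
  have hτ' : (τ : ℂ) ≠ 0 := ofReal_ne_zero.2 hτ.ne'
  have hne : 1 - exp (-τ : ℂ) ≠ 0 := fun h => by
    rw [← sub_eq_zero.1 h, norm_one] at hlt
    exact lt_irrefl _ hlt
  have hden : dslope exp 0 τ = (1 - exp (-τ)) / (τ * exp (-τ)) := by
    have hmul := mul_dslope_exp (τ : ℂ)
    have hinv : exp (τ : ℂ) * exp (-τ) = 1 := by rw [← exp_add, add_neg_cancel, exp_zero]
    rw [eq_div_iff (mul_ne_zero hτ' (exp_ne_zero _))]
    linear_combination exp (-τ : ℂ) * hmul + hinv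
  have hval : τ * exp (b * τ) * exp (-τ) * (1 - exp (-τ))⁻¹ = bernoulliGenFun b τ := by
    rw [bernoulliGenFun, hden]
    field_simp
  rw [← hval]
  refine ((hasSum_geometric_of_norm_lt_one hlt).mul_left _).congr_fun fun n => ?_
  rw [← exp_nat_mul, mul_assoc, mul_assoc, ← exp_add, ← exp_add]
  ring_nf

theorem summable_div_add_mul_sq {y v c : ℝ} (hy : 0 < y) (hv : 0 < v) (hc : 0 ≤ c) :
    Summable fun n : ℕ => v / (y + (n + c) * v) ^ 2 := by
  have h := ((Real.summable_one_div_nat_add_rpow (y / v + c) 2).2 one_lt_two).mul_left v⁻¹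
  refine h.congr fun n => ?_
  rw [abs_of_nonneg (by positivity), Real.rpow_two]
  field_simp
  ring_nf

theorem integral_mul_exp_neg_mul_Ioi {c : ℝ} (hc : 0 < c) :
    ∫ t in Ioi (0 : ℝ), t * Real.exp (-c * t) = 1 / c ^ 2 := by
  have h := Real.integral_rpow_mul_exp_neg_mul_Ioi two_pos hc
  norm_num at h
  simpa using h

theorem integrableOn_mul_exp_neg_mul_Ioi {c : ℝ} (hc : 0 < c) :
    IntegrableOn (fun t : ℝ => t * Real.exp (-c * t)) (Ioi 0) := by
  simpa using integrableOn_rpow_mul_exp_neg_mul_rpow (s := 1) (p := 1) (by norm_num) one_pos hc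

theorem hasSum_integral_exp_mul_bernoulliGenFun {b y v : ℝ} (hb : b ≤ 1) (hy : 0 < y)
    (hv : 0 < v) :
    HasSum (fun n : ℕ => ((y * v / (y + (n + (1 - b)) * v) ^ 2 : ℝ) : ℂ))
      (∫ t in Ioi (0 : ℝ), y * exp (-y * t) * bernoulliGenFun b (v * t)) := by
  have hpos (n : ℕ) : 0 < y + (n + (1 - b)) * v := by
    have : 0 ≤ 1 - b := sub_nonneg.2 hb
    positivity
  have hterm (n : ℕ) : ((y * v / (y + (n + (1 - b)) * v) ^ 2 : ℝ) : ℂ) =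
      (y * v : ℝ) * (∫ t in Ioi (0 : ℝ), t * Real.exp (-(y + (n + (1 - b)) * v) * t) : ℝ) := by
    rw [integral_mul_exp_neg_mul_Ioi (hpos n), ← ofReal_mul, mul_one_div]
  have hsum : Summable fun n : ℕ => ‖((y * v / (y + (n + (1 - b)) * v) ^ 2 : ℝ) : ℂ)‖ := by
    refine ((summable_div_add_mul_sq hy hv (sub_nonneg.2 hb)).mul_left y).congr fun n => ?_
    rw [norm_real, Real.norm_of_nonneg (by positivity), mul_div_assoc]
  simp only [hterm] at hsum ⊢
  refine hasSum_mul_integral_of_nonneg (fun n => integrableOn_mul_exp_neg_mul_Ioi (hpos n))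
    (fun n => ?_) hsum ?_ <;> filter_upwards [ae_restrict_mem measurableSet_Ioi] with t ht
  · exact mul_nonneg (le_of_lt ht) (Real.exp_pos _).le
  · have h := (hasSum_bernoulliGenFun b (mul_pos hv ht)).mul_left (y * exp (-y * t))
    rw [ofReal_mul] at h
    refine h.congr_fun fun n => ?_
    have hexp : exp (-(y + (n + (1 - b)) * v) * t) =
        exp (-y * t) * exp (-(n + 1 - b) * (v * t)) := by
      rw [← exp_add]
      ring_nf
    push_cast
    rw [hexp]
    ring

theorem ofReal_rpow_mul_one_sub_rpow {v : ℝ} (hv : v ∈ Icc (0 : ℝ) 1) (a c : ℝ) :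
    ((v ^ (a - 1) * (1 - v) ^ (c - 1) : ℝ) : ℂ) =
      (v : ℂ) ^ ((a : ℂ) - 1) * (1 - (v : ℂ)) ^ ((c : ℂ) - 1) := by
  rw [ofReal_mul, ofReal_cpow hv.1, ofReal_cpow (sub_nonneg.2 hv.2)]
  push_cast
  rfl

theorem ofReal_integral_rpow_mul_one_sub_rpow (a c : ℝ) :
    ((∫ v in (0 : ℝ)..1, v ^ (a - 1) * (1 - v) ^ (c - 1) : ℝ) : ℂ) = betaIntegral a c := by
  rw [← intervalIntegral.integral_ofReal, betaIntegral]
  refine intervalIntegral.integral_congr fun v hv => ?_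
  exact ofReal_rpow_mul_one_sub_rpow (uIcc_of_le (zero_le_one' ℝ) ▸ hv) a c

theorem intervalIntegrable_rpow_mul_one_sub_rpow {a c : ℝ} (ha : 0 < a) (hc : 0 < c) :
    IntervalIntegrable (fun v : ℝ => v ^ (a - 1) * (1 - v) ^ (c - 1)) volume 0 1 := by
  have h := betaIntegral_convergent (u := a) (v := c) (by simpa) (by simpa)
  rw [intervalIntegrable_iff_integrableOn_Icc_of_le zero_le_one] at h ⊢
  refine IntegrableOn.congr_fun (Integrable.re h) (fun v hv => ?_) measurableSet_Icc
  simp [← ofReal_rpow_mul_one_sub_rpow hv a c]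

theorem hasDerivAt_moebius {y c v : ℝ} (hv : y + c * v ≠ 0) :
    HasDerivAt (fun v => v * (y + c) / (y + c * v)) (y * (y + c) / (y + c * v) ^ 2) v := by
  have hnum : HasDerivAt (fun v => v * (y + c)) (y + c) v := by
    simpa using (hasDerivAt_id v).mul_const (y + c)
  have hden : HasDerivAt (fun v => y + c * v) c v := by
    simpa using ((hasDerivAt_id v).const_mul c).const_add y
  refine (hnum.fun_div hden hv).congr_deriv ?_
  ring

theorem integral_rpow_mul_one_sub_rpow_mul_add_mul_rpow {y c : ℝ} (hy : 0 < y) (hc : 0 ≤ c)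
    (α β : ℝ) :
    ∫ v in (0 : ℝ)..1, v ^ α * (1 - v) ^ β * (y + c * v) ^ (-(α + β + 2)) =
      y ^ (-1 - β) * (y + c) ^ (-1 - α) * ∫ p in (0 : ℝ)..1, p ^ α * (1 - p) ^ β := by
  -- Substitute `p = v (y + c) / (y + c v)`, which maps `[0, 1]` onto itself.
  have hden {v : ℝ} (hv : 0 ≤ v) : 0 < y + c * v := by positivity
  have hcont : ContinuousOn (fun v => v * (y + c) / (y + c * v)) (uIcc 0 1) := by
    rw [uIcc_of_le zero_le_one]
    exact fun v hv => (hasDerivAt_moebius (hden hv.1).ne').continuousAt.continuousWithinAt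
  have hsubst := intervalIntegral.integral_comp_mul_deriv_of_deriv_nonneg
    (g := fun p => p ^ α * (1 - p) ^ β) hcont
    (fun v hv => hasDerivAt_moebius (hden (by simpa using hv.1.le)).ne')
    (fun v _ => by positivity)
  simp only [zero_mul, zero_div, one_mul, mul_one, div_self (by positivity : y + c ≠ 0)] at hsubst
  rw [← hsubst, ← intervalIntegral.integral_const_mul]
  refine intervalIntegral.integral_congr fun v hv => ?_
  rw [uIcc_of_le zero_le_one] at hv
  have hv₁ : 0 ≤ 1 - v := sub_nonneg.2 hv.2
  have hD := hden hv.1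
  have hone_sub : 1 - v * (y + c) / (y + c * v) = y * (1 - v) / (y + c * v) := by
    rw [eq_div_iff hD.ne', sub_mul, div_mul_cancel₀ _ hD.ne']
    ring
  simp only [Function.comp_apply]
  rw [hone_sub, Real.div_rpow (mul_nonneg hv.1 (by positivity)) hD.le,
    Real.div_rpow (by positivity) hD.le, Real.mul_rpow hv.1 (by positivity),
    Real.mul_rpow hy.le hv₁, Real.rpow_neg hD.le, Real.rpow_add hD, Real.rpow_add hD,
    Real.rpow_two, Real.rpow_sub hy, Real.rpow_sub (by positivity : 0 < y + c), Real.rpow_neg_one,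
    Real.rpow_neg_one]
  field_simp

theorem ofReal_integral_rpow_mul_one_sub_rpow_neg {α : ℝ} (hα₀ : 0 < α) (hα₁ : α < 1) :
    ((∫ p in (0 : ℝ)..1, p ^ α * (1 - p) ^ (-α) : ℝ) : ℂ) = α * betaIntegral α (1 - α) := by
  have hshift := betaIntegral_add_natCast_mul_multichoose (α := α) (β := (1 - α : ℝ))
    (by simpa) (by simpa) 1
  have hbeta := ofReal_integral_rpow_mul_one_sub_rpow (α + 1) (1 - α)
  simp only [add_sub_cancel_right, sub_sub_cancel_left] at hbeta
  simpa [hbeta, Ring.multichoose_one_right] using hshift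

theorem summable_add_natCast_add_rpow {y b α : ℝ} (hb : b ≤ 1) (hy : 0 < y) (hα : 0 < α) :
    Summable fun n : ℕ => (y + (n + (1 - b))) ^ (-1 - α) := by
  refine ((Real.summable_one_div_nat_add_rpow (y + (1 - b)) (1 + α)).2 (by linarith)).congr
    fun n => ?_
  have hpos : 0 < y + (n + (1 - b)) := by
    have := sub_nonneg.2 hb
    positivity
  rw [show (n : ℝ) + (y + (1 - b)) = y + (n + (1 - b)) by ring, abs_of_pos hpos,
    show -1 - α = -(1 + α) by ring, Real.rpow_neg hpos.le, one_div]

/-- The kernel `v ^ α (1 - v) ^ (-α) / (y + c v) ^ 2` on `[0, 1]`. It arises from averaging the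
Laplace transform of `t ↦ v t exp (-c v t)` at `y` against the Beta density with parameters `α` and
`1 - α`, and its integral is a multiple of `(y + c) ^ (-1 - α)`. -/
noncomputable def betaLaplaceKernel (α y c v : ℝ) : ℝ :=
  v ^ α * (1 - v) ^ (-α) * (y + c * v) ^ (-2 : ℝ)

theorem betaLaplaceKernel_nonneg {α y c v : ℝ} (hy : 0 < y) (hc : 0 ≤ c) (hv : v ∈ Ioc (0 : ℝ) 1) :
    0 ≤ betaLaplaceKernel α y c v := by
  have hv₀ := hv.1
  have hv₁ := sub_nonneg.2 hv.2
  unfold betaLaplaceKernel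
  positivity

theorem integrableOn_betaLaplaceKernel {α y c : ℝ} (hα₀ : 0 < α) (hα₁ : α < 1) (hy : 0 < y)
    (hc : 0 ≤ c) : IntegrableOn (betaLaplaceKernel α y c) (Ioc 0 1) := by
  have hweight := intervalIntegrable_rpow_mul_one_sub_rpow (a := α + 1) (c := 1 - α)
    (by linarith) (by linarith)
  simp only [add_sub_cancel_right, sub_sub_cancel_left] at hweight
  rw [← intervalIntegrable_iff_integrableOn_Ioc_of_le zero_le_one]
  refine hweight.mul_continuousOn ?_
  rw [uIcc_of_le zero_le_one]
  refine ContinuousOn.rpow_const (by fun_prop) fun v hv => Or.inl ?_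
  have := mul_nonneg hc hv.1
  positivity

theorem mul_integral_betaLaplaceKernel {α y c : ℝ} (hα₀ : 0 < α) (hα₁ : α < 1) (hy : 0 < y)
    (hc : 0 ≤ c) :
    (y : ℂ) * (∫ v in Ioc 0 1, betaLaplaceKernel α y c v : ℝ) =
      (y : ℂ) ^ (α : ℂ) * (α * betaIntegral α (1 - α)) * ((y + c) ^ (-1 - α) : ℝ) := by
  have hmoebius := integral_rpow_mul_one_sub_rpow_mul_add_mul_rpow hy hc α (-α)
  rw [show -(α + -α + 2) = -2 by ring, show -1 - -α = α - 1 by ring,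
    Real.rpow_sub_one hy.ne'] at hmoebius
  rw [← intervalIntegral.integral_of_le zero_le_one,
    ← ofReal_integral_rpow_mul_one_sub_rpow_neg hα₀ hα₁, ← ofReal_cpow hy.le]
  unfold betaLaplaceKernel
  rw [hmoebius]
  norm_cast
  field_simp

theorem mul_betaLaplaceKernel {α y c v : ℝ} (hy : 0 < y) (hc : 0 ≤ c) (hv : v ∈ Ioc (0 : ℝ) 1) :
    (y : ℂ) * betaLaplaceKernel α y c v =
      (v : ℂ) ^ ((α : ℂ) - 1) * (1 - (v : ℂ)) ^ (1 - (α : ℂ) - 1) *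
        (y * v / (y + c * v) ^ 2 : ℝ) := by
  have hweight := ofReal_rpow_mul_one_sub_rpow ⟨hv.1.le, hv.2⟩ α (1 - α)
  rw [ofReal_sub, ofReal_one] at hweight
  have hden : 0 ≤ y + c * v := by
    have := hv.1
    positivity
  rw [← hweight, sub_sub_cancel_left, Real.rpow_sub_one hv.1.ne', betaLaplaceKernel,
    Real.rpow_neg hden, Real.rpow_two]
  norm_cast
  have := hv.1.ne'
  field_simp

theorem hasSum_integral_weight_mul_bernoulliGenFun {b y α : ℝ} (hb : b ≤ 1) (hy : 0 < y)
    (hα₀ : 0 < α) (hα₁ : α < 1) :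
    HasSum (fun n : ℕ => (y : ℂ) ^ (α : ℂ) * (α * betaIntegral α (1 - α)) *
        ((y + (n + (1 - b))) ^ (-1 - α) : ℝ))
      (∫ v in (0 : ℝ)..1, (v : ℂ) ^ ((α : ℂ) - 1) * (1 - (v : ℂ)) ^ (1 - (α : ℂ) - 1) *
        ∫ t in Ioi (0 : ℝ), y * exp (-y * t) * bernoulliGenFun b (v * t)) := by
  have hc (n : ℕ) : 0 ≤ n + (1 - b) := add_nonneg n.cast_nonneg (sub_nonneg.2 hb)
  have hsummable := ((Complex.hasSum_ofReal.2 (summable_add_natCast_add_rpow hb hy hα₀).hasSum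
    ).mul_left ((y : ℂ) ^ (α : ℂ) * (α * betaIntegral α (1 - α)))).summable.norm
  rw [intervalIntegral.integral_of_le zero_le_one]
  simp only [← mul_integral_betaLaplaceKernel hα₀ hα₁ hy (hc _)] at hsummable ⊢
  refine hasSum_mul_integral_of_nonneg
    (fun n => integrableOn_betaLaplaceKernel hα₀ hα₁ hy (hc n))
    (fun n => (ae_restrict_iff' measurableSet_Ioc).2
      (ae_of_all _ fun v hv => betaLaplaceKernel_nonneg hy (hc n) hv)) hsummable
    ((ae_restrict_iff' measurableSet_Ioc).2 (ae_of_all _ fun v hv => ?_))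
  exact ((hasSum_integral_exp_mul_bernoulliGenFun hb hy hv.1).mul_left _).congr_fun
    fun n => mul_betaLaplaceKernel hy (hc n) hv

theorem hasSum_stirlingSum_bernoulliSeries {b y α : ℝ} (hb : b ≤ 1) (hy : 0 < y) (hα₀ : 0 < α)
    (hα₁ : α < 1) :
    HasSum (fun k => stirlingSum k (binomialHadamard α (bernoulliSeries b)) / risingProd (y : ℂ) k)
      (α * (y : ℂ) ^ (α : ℂ) * ∑' n : ℕ, (((y + (n + (1 - b))) ^ (-1 - α) : ℝ) : ℂ)) := by
  have hstirling := (isSubexpOn_bernoulliGenFun hb).hasSum_stirlingSum_binomialHadamard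
    (by linarith [Real.pi_lt_four]) hy (α := α) (by simpa) (by simpa)
  have hbeta : betaIntegral α (1 - α) ≠ 0 := betaIntegral_ne_zero (by simpa) (by simpa)
  rw [taylorSeries_bernoulliGenFun,
    ← (hasSum_integral_weight_mul_bernoulliGenFun hb hy hα₀ hα₁).tsum_eq,
    tsum_mul_left] at hstirling
  have hvalue (S : ℂ) : (y : ℂ) ^ (α : ℂ) * (α * betaIntegral α (1 - α)) * S /
      betaIntegral α (1 - α) = α * (y : ℂ) ^ (α : ℂ) * S := by
    field_simp
  rw [← hvalue]
  exact (hstirling.div_const _).congr_fun fun k => by field_simp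

/-! ### The Faulhaber formula -/

theorem stirlingSum_zero_bernoulliSeries_div_risingProd_zero (α z : ℂ) (b : ℝ) :
    stirlingSum 0 (binomialHadamard α (bernoulliSeries b)) / risingProd z 0 = 1 := by
  simp [stirlingSum_zero, coeff_binomialHadamard, bernoulliSeries, bernPoly, risingProd]

theorem summable_natCast_add_one_cpow {s : ℂ} (hs : s.re < -1) :
    Summable fun n : ℕ => ((n : ℂ) + 1) ^ s := by
  have h := (summable_nat_add_iff 1).2
    (Complex.summable_one_div_nat_cpow.2 (by simpa using lt_neg.1 hs : 1 < (-s).re))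
  simpa [cpow_neg] using h

theorem sum_Icc_cpow_add_tsum_eq_riemannZeta {s : ℂ} (hs : s.re < -1) (N : ℕ) :
    ∑ k ∈ Finset.Icc 1 N, (k : ℂ) ^ s + ∑' n : ℕ, ((n + N : ℕ) + 1 : ℂ) ^ s =
      riemannZeta (-s) := by
  have hhead : ∑ k ∈ Finset.Icc 1 N, (k : ℂ) ^ s = ∑ n ∈ Finset.range N, ((n : ℂ) + 1) ^ s := by
    rw [← Finset.Ico_succ_right_eq_Icc, Finset.sum_Ico_eq_sum_range]
    simp [add_comm]
  rw [hhead, (summable_natCast_add_one_cpow hs).sum_add_tsum_nat_add N,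
    zeta_eq_tsum_one_div_nat_add_one_cpow (by simpa using lt_neg.1 hs)]
  simp [cpow_neg]

/-- The difference between the two sides of the Faulhaber formula, multiplied by `m + 1`. -/
noncomputable def faulhaberDefect (x : ℝ) (m : ℂ) : ℂ :=
  (m + 1) * (∑ k ∈ Finset.Icc 1 ⌊x⌋₊, (k : ℂ) ^ m - riemannZeta (-m)) -
    (x : ℂ) ^ (m + 1) * (1 + ∑' k, stirlingSum (k + 1)
      (binomialHadamard (-(m + 1)) (bernoulliSeries (Int.fract x))) / risingProd (x : ℂ) (k + 1))

theorem add_natCast_add_one_sub_fract {x : ℝ} (hx : 0 ≤ x) (n : ℕ) :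
    x + (n + (1 - Int.fract x)) = (n + ⌊x⌋₊ : ℕ) + 1 := by
  have hfloor := natCast_floor_eq_intCast_floor hx
  rw [Nat.cast_add, hfloor, ← Int.self_sub_fract]
  ring

theorem faulhaberDefect_neg_one_sub {x α : ℝ} (hx : 0 < x) (hα₀ : 0 < α) (hα₁ : α < 1) :
    faulhaberDefect x (-1 - α) = 0 := by
  have hseries := hasSum_stirlingSum_bernoulliSeries (Int.fract_lt_one x).le hx hα₀ hα₁
  have htail (n : ℕ) : (((x + (n + (1 - Int.fract x))) ^ (-1 - α) : ℝ) : ℂ) =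
      ((n + ⌊x⌋₊ : ℕ) + 1 : ℂ) ^ (-1 - α : ℂ) := by
    rw [add_natCast_add_one_sub_fract hx.le, ofReal_cpow (by positivity)]
    push_cast
    rfl
  have hvalue := hseries.summable.tsum_eq_zero_add.symm.trans hseries.tsum_eq
  simp only [stirlingSum_zero_bernoulliSeries_div_risingProd_zero, htail] at hvalue
  have hzeta := sum_Icc_cpow_add_tsum_eq_riemannZeta (s := -1 - α) (by simpa using hα₀) ⌊x⌋₊
  have hpow : (x : ℂ) ^ (-α : ℂ) * (x : ℂ) ^ (α : ℂ) = 1 := by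
    rw [← cpow_add _ _ (ofReal_ne_zero.2 hx.ne'), neg_add_cancel, cpow_zero]
  have hexp : (-1 - α + 1 : ℂ) = -α := by ring
  simp only [faulhaberDefect, hexp, neg_neg, ← hzeta, hvalue]
  linear_combination (-(α : ℂ) * ∑' n : ℕ, ((n + ⌊x⌋₊ : ℕ) + 1 : ℂ) ^ (-1 - α : ℂ)) * hpow

theorem differentiableOn_faulhaberDefect {x : ℝ} (hx : 0 < x) :
    DifferentiableOn ℂ (faulhaberDefect x) {-1}ᶜ := by
  intro m hm
  have hsum : DifferentiableAt ℂ (fun m : ℂ => ∑ k ∈ Finset.Icc 1 ⌊x⌋₊, (k : ℂ) ^ m) m :=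
    DifferentiableAt.fun_sum fun k hk => differentiableAt_id.const_cpow <| Or.inl <|
      Nat.cast_ne_zero.2 (Nat.one_le_iff_ne_zero.1 (Finset.mem_Icc.1 hk).1)
  have hzeta : DifferentiableAt ℂ (fun m : ℂ => riemannZeta (-m)) m :=
    (differentiableAt_riemannZeta fun h => hm (by simp [← h])).comp m differentiableAt_id.neg
  have hpow : DifferentiableAt ℂ (fun m : ℂ => (x : ℂ) ^ (m + 1)) m :=
    (differentiableAt_id.add_const 1).const_cpow (Or.inl (ofReal_ne_zero.2 hx.ne'))
  have hseries := ((isSubexpSeries_bernoulliSeries (Int.fract_lt_one x).le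
    ).differentiable_tsum_stirlingSum_div_risingProd hx (-(m + 1))).comp m
    (differentiableAt_id.add_const (1 : ℂ)).neg
  exact (((differentiableAt_id.add_const 1).mul (hsum.sub hzeta)).sub
    (hpow.mul (hseries.const_add 1))).differentiableWithinAt

theorem frequently_faulhaberDefect_eq_zero {x : ℝ} (hx : 0 < x) :
    ∃ᶠ m in 𝓝[≠] (-1 - (1 / 2 : ℝ) : ℂ), faulhaberDefect x m = 0 := by
  have hinj : Function.Injective fun α : ℝ => (-1 - α : ℂ) := fun α β h => by simpa using h
  have htendsto : Tendsto (fun α : ℝ => (-1 - α : ℂ)) (𝓝[≠] (1 / 2))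
      (𝓝[≠] (-1 - (1 / 2 : ℝ) : ℂ)) :=
    (Continuous.continuousAt (by fun_prop)).continuousWithinAt.tendsto_nhdsWithin
      fun α hα => hinj.ne hα
  refine htendsto.frequently (Eventually.frequently ?_)
  filter_upwards [nhdsWithin_le_nhds (Ioo_mem_nhds one_half_pos one_half_lt_one)] with α hα
  exact faulhaberDefect_neg_one_sub hx hα.1 hα.2

theorem faulhaberDefect_eq_zero {x : ℝ} (hx : 0 < x) {m : ℂ} (hm : m ≠ -1) :
    faulhaberDefect x m = 0 := by
  have hconn : IsPreconnected ({-1}ᶜ : Set ℂ) :=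
    (isConnected_compl_singleton_of_one_lt_rank (by simp [rank_real_complex]) _).isPreconnected
  exact ((differentiableOn_faulhaberDefect hx).analyticOnNhd isOpen_compl_singleton
    ).eqOn_zero_of_preconnected_of_frequently_eq_zero hconn (by simp)
    (frequently_faulhaberDefect_eq_zero hx) hm

end Development

open Finset in
/-- The extended generalized Faulhaber formula (formula (28) of Theorem 5.1). -/
theorem extended_generalized_faulhaber (m : ℂ) (hm : m ≠ -1) (x : ℝ) (hx : 0 < x) :
    Summable (fun k : ℕ =>
      ‖(-1 : ℂ) ^ (k + 1) *
          (∑ l ∈ Icc 1 (k + 1),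
            cchoose (m + 1) l * (S1 (k + 1) l : ℂ) * (bernPoly l (Int.fract x) : ℂ)) /
        risingProd (x : ℂ) (k + 1)‖) ∧
    (∑ k ∈ Icc 1 ⌊x⌋₊, (k : ℂ) ^ m) =
      (x : ℂ) ^ (m + 1) / (m + 1) + riemannZeta (-m) +
        (x : ℂ) ^ (m + 1) / (m + 1) *
          ∑' k : ℕ,
            (-1 : ℂ) ^ (k + 1) *
                (∑ l ∈ Icc 1 (k + 1),
                  cchoose (m + 1) l * (S1 (k + 1) l : ℂ) * (bernPoly l (Int.fract x) : ℂ)) /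
              risingProd (x : ℂ) (k + 1) := by
  simp only [neg_one_pow_mul_sum_cchoose_mul_S1]
  refine ⟨(isSubexpSeries_bernoulliSeries (Int.fract_lt_one x).le
    ).summable_norm_stirlingSum_div_risingProd hx _, ?_⟩
  have hdefect := faulhaberDefect_eq_zero hx hm
  have hm' : m + 1 ≠ 0 := fun h => hm (eq_neg_of_add_eq_zero_left h)
  rw [faulhaberDefect] at hdefect
  field_simp
  linear_combination hdefect
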